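/- arXiv:1909.03870 — 2 statements merged into one kernel-verified Lean document; each statement's English description precedes it below -/
import Mathlib

section
/- Let μ̌ ∈ 𝒫(ℝ)^{dT} satisfy ℳ_ε(μ̌) ≠ ∅ for some ε ≥ 0, and let μ̌' ∈ 𝒫(ℝ)^{dT} be arbitrary. Set r := 2 max_{1≤t≤T} Σ_{1≤i≤d} 𝒲₁(μ'_{t,i}, μ_{t,i}). Then ℳ_{ε+r}(μ̌') ≠ ∅. Moreover, if the cost c is L-Lipschitz, then P̄_ε(μ̌) ≤ P̄_{ε+r}(μ̌') + LTr/2 and P̲_ε(μ̌) ≥ P̲_{ε+r}(μ̌') − LTr/2. -/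
open MeasureTheory Filter

namespace MMOT

/-- Path space `𝒳 = (ℝ^d)^T`. -/
abbrev Path (T d : ℕ) := Fin T → Fin d → ℝ

/-- σ-algebra generated by the coordinates `X_0, …, X_t` (0-indexed). -/
noncomputable def pastSigma (T d : ℕ) (t : ℕ) : MeasurableSpace (Path T d) :=
  ⨆ s : Fin T, ⨆ _ : (s : ℕ) ≤ t, MeasurableSpace.comap (fun x => x s) inferInstance

def HasMarginals {T d : ℕ} (π : Measure (Path T d)) (μ : Fin T → Fin d → Measure ℝ) : Prop :=
  ∀ t i, π.map (fun x => x t i) = μ t i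

/-- `E_π[X_{t+1,i} | X_0,…,X_t]`. -/
noncomputable def condNext {T d : ℕ} (π : Measure (Path T d)) (t : ℕ) (ht : t + 1 < T)
    (i : Fin d) : Path T d → ℝ :=
  π[fun x => x ⟨t + 1, ht⟩ i | pastSigma T d t]

/-- The relaxed set `ℳ_ε(μ̌)`: calibrated measures whose martingale defect is at most `ε`. -/
def MartSetEps {T d : ℕ} (μ : Fin T → Fin d → Measure ℝ) (ε : ℝ) :
    Set (Measure (Path T d)) :=
  {π | IsProbabilityMeasure π ∧ HasMarginals π μ ∧
    ∀ (t : ℕ) (ht : t + 1 < T),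
      ∫ x, ∑ i, |condNext π t ht i x - x ⟨t, Nat.lt_of_succ_lt ht⟩ i| ∂π ≤ ε}

def primalVals {T d : ℕ} (c : Path T d → ℝ) (S : Set (Measure (Path T d))) : Set ℝ :=
  {r | ∃ π ∈ S, Integrable c π ∧ r = ∫ x, c x ∂π}

noncomputable def PbarEps {T d : ℕ} (μ : Fin T → Fin d → Measure ℝ) (c : Path T d → ℝ)
    (ε : ℝ) : ℝ :=
  sSup (primalVals c (MartSetEps μ ε))

noncomputable def PlowEps {T d : ℕ} (μ : Fin T → Fin d → Measure ℝ) (c : Path T d → ℝ)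
    (ε : ℝ) : ℝ :=
  sInf (primalVals c (MartSetEps μ ε))

/-- Wasserstein-1 distance on probability measures on `ℝ`. -/
noncomputable def W1R (μ ν : Measure ℝ) : ℝ :=
  sInf {r | ∃ γ : Measure (ℝ × ℝ), IsProbabilityMeasure γ ∧ γ.map Prod.fst = μ ∧
    γ.map Prod.snd = ν ∧ Integrable (fun p => |p.1 - p.2|) γ ∧
    r = ∫ p, |p.1 - p.2| ∂γ}

/-- Lipschitz continuity with respect to the `ℓ¹`-norm on the path space. -/
def LipschitzCost {T d : ℕ} (L : ℝ) (c : Path T d → ℝ) : Prop :=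
  ∀ x y, |c x - c y| ≤ L * ∑ t, ∑ i, |x t i - y t i|

section Aux
open ProbabilityTheory Set Topology

noncomputable def qf (μ : Measure ℝ) (u : ℝ) : ℝ := sInf {x | u ≤ cdf μ x}

lemma qf_le_iff (μ : Measure ℝ) {u : ℝ} (hu : u ∈ Ioo (0:ℝ) 1) (z : ℝ) :
    qf μ u ≤ z ↔ u ≤ cdf μ z := by
  have hne : {x | u ≤ cdf μ x}.Nonempty := by
    obtain ⟨x, hx⟩ := ((tendsto_cdf_atTop μ).eventually (eventually_gt_nhds hu.2)).exists
    exact ⟨x, hx.le⟩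
  have hbd : BddBelow {x | u ≤ cdf μ x} := by
    obtain ⟨b, hb⟩ := ((tendsto_cdf_atBot μ).eventually (eventually_lt_nhds hu.1)).exists
    refine ⟨b, fun x hx => ?_⟩
    by_contra h
    push Not at h
    have := monotone_cdf μ h.le
    have hx' : u ≤ cdf μ x := hx
    linarith
  constructor
  · intro h
    refine le_trans ?_ (monotone_cdf μ h)
    have hc : Tendsto (cdf μ) (𝓝[>] (qf μ u)) (𝓝 (cdf μ (qf μ u))) :=
      continuousWithinAt_Ioi_iff_Ici.mpr ((cdf μ).right_continuous (qf μ u))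
    refine ge_of_tendsto hc (eventually_nhdsWithin_of_forall fun x hx => ?_)
    obtain ⟨a, ha, hax⟩ := exists_lt_of_csInf_lt hne hx
    exact le_trans ha (monotone_cdf μ hax.le)
  · intro h
    exact csInf_le hbd h

noncomputable abbrev uu : Measure ℝ := volume.restrict (Ioo (0:ℝ) 1)

instance : IsProbabilityMeasure uu := ⟨by simp [uu]⟩

lemma qf_mono (μ : Measure ℝ) : MonotoneOn (qf μ) (Ioo (0:ℝ) 1) := by
  intro u hu v hv huv
  rw [qf_le_iff μ hu]
  exact huv.trans ((qf_le_iff μ hv _).1 le_rfl)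

lemma qf_aem (μ : Measure ℝ) : AEMeasurable (qf μ) uu :=
  aemeasurable_restrict_of_monotoneOn measurableSet_Ioo (qf_mono μ)

lemma qf_map (μ : Measure ℝ) [IsProbabilityMeasure μ] : uu.map (qf μ) = μ := by
  have : IsProbabilityMeasure (uu.map (qf μ)) := Measure.isProbabilityMeasure_map (qf_aem μ)
  refine Measure.ext_of_Iic _ _ fun z => ?_
  rw [Measure.map_apply_of_aemeasurable (qf_aem μ) measurableSet_Iic, ← ofReal_cdf,
    Measure.restrict_apply' measurableSet_Ioo]
  have h0 := cdf_nonneg μ z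
  have h1 := cdf_le_one μ z
  have : qf μ ⁻¹' Iic z ∩ Ioo 0 1 = Iic (cdf μ z) ∩ Ioo 0 1 := by
    ext u
    simp only [mem_inter_iff, mem_preimage, mem_Iic]
    exact and_congr_left fun hu => qf_le_iff μ hu z
  rw [this]
  apply le_antisymm
  · calc volume (Iic (cdf μ z) ∩ Ioo 0 1) ≤ volume (Ioc 0 (cdf μ z)) := by
          apply measure_mono
          rintro u ⟨h, h'⟩
          exact ⟨h'.1, h⟩
      _ = _ := by simp
  · calc ENNReal.ofReal (cdf μ z) = volume (Ioo 0 (cdf μ z)) := by simp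
      _ ≤ _ := by
          apply measure_mono
          rintro u ⟨h, h'⟩
          exact ⟨h'.le, h, h'.trans_le h1⟩

def DD (z : ℝ) : Set (ℝ × ℝ) := {p | (p.1 ≤ z ∧ z < p.2) ∨ (p.2 ≤ z ∧ z < p.1)}

lemma DD_meas2 : MeasurableSet {q : (ℝ × ℝ) × ℝ | q.1 ∈ DD q.2} := by
  have h1 : Measurable fun q : (ℝ × ℝ) × ℝ => q.1.1 := by fun_prop
  have h2 : Measurable fun q : (ℝ × ℝ) × ℝ => q.1.2 := by fun_prop
  have h3 : Measurable fun q : (ℝ × ℝ) × ℝ => q.2 := by fun_prop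
  exact ((measurableSet_le h1 h3).inter (measurableSet_lt h3 h2)).union
    ((measurableSet_le h2 h3).inter (measurableSet_lt h3 h1))

lemma DD_meas (z : ℝ) : MeasurableSet (DD z) := by
  have : Measurable fun p : ℝ × ℝ => (p, z) := by fun_prop
  exact this DD_meas2

lemma lint_dist (γ : Measure (ℝ × ℝ)) [SFinite γ] :
    ∫⁻ p, ENNReal.ofReal |p.1 - p.2| ∂γ = ∫⁻ z, γ (DD z) := by
  have h1 := Measure.prod_apply (μ := γ) (ν := (volume : Measure ℝ)) DD_meas2
  have h2 := Measure.prod_apply_symm (μ := γ) (ν := (volume : Measure ℝ)) DD_meas2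
  rw [h1] at h2
  refine Eq.trans ?_ h2
  refine lintegral_congr fun p => ?_
  have : (Prod.mk p ⁻¹' {q : (ℝ × ℝ) × ℝ | q.1 ∈ DD q.2}) = Ico (min p.1 p.2) (max p.1 p.2) := by
    ext z
    simp only [DD, mem_preimage, mem_ofPred_eq, mem_Ico, min_le_iff, lt_max_iff]
    grind
  rw [this, Real.volume_Ico, max_sub_min_eq_abs']

lemma DD_qf (μ ν : Measure ℝ) [IsProbabilityMeasure μ] [IsProbabilityMeasure ν]
    (γ : Measure (ℝ × ℝ)) [IsProbabilityMeasure γ] (h1 : γ.map Prod.fst = μ)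
    (h2 : γ.map Prod.snd = ν) (z : ℝ) :
    uu.map (fun u => (qf μ u, qf ν u)) (DD z) ≤ γ (DD z) := by
  rw [Measure.map_apply_of_aemeasurable ((qf_aem μ).prodMk (qf_aem ν)) (DD_meas z),
    Measure.restrict_apply' measurableSet_Ioo]
  have e1 : γ {p | p.1 ≤ z} = ENNReal.ofReal (cdf μ z) := by
    rw [ofReal_cdf, ← h1, Measure.map_apply measurable_fst measurableSet_Iic]; rfl
  have e2 : γ {p | p.2 ≤ z} = ENNReal.ofReal (cdf ν z) := by
    rw [ofReal_cdf, ← h2, Measure.map_apply measurable_snd measurableSet_Iic]; rfl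
  have k1 : γ {p | p.1 ≤ z} ≤ γ (DD z) + γ {p | p.2 ≤ z} := by
    refine (measure_mono ?_).trans (measure_union_le _ _)
    intro p hp
    simp only [DD, mem_union, mem_ofPred_eq] at *
    grind
  have k2 : γ {p | p.2 ≤ z} ≤ γ (DD z) + γ {p | p.1 ≤ z} := by
    refine (measure_mono ?_).trans (measure_union_le _ _)
    intro p hp
    simp only [DD, mem_union, mem_ofPred_eq] at *
    grind
  rw [e1, e2] at k1 k2
  have hsub : (fun u => (qf μ u, qf ν u)) ⁻¹' DD z ∩ Ioo 0 1 ⊆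
      Ioc (cdf ν z) (cdf μ z) ∪ Ioc (cdf μ z) (cdf ν z) := by
    rintro u ⟨hu, hu1⟩
    simp only [DD, mem_preimage, mem_ofPred_eq, ← not_le, qf_le_iff _ hu1] at hu
    simp only [mem_union, mem_Ioc]
    grind
  refine (measure_mono hsub).trans ?_
  rcases le_total (cdf ν z) (cdf μ z) with h | h
  · rw [Ioc_eq_empty_of_le h, union_empty, Real.volume_Ioc,
      ENNReal.ofReal_sub _ (cdf_nonneg ν z)]
    exact tsub_le_iff_right.2 k1
  · rw [Ioc_eq_empty_of_le h, empty_union, Real.volume_Ioc,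
      ENNReal.ofReal_sub _ (cdf_nonneg μ z)]
    exact tsub_le_iff_right.2 k2

lemma integrable_cpl {μ ν : Measure ℝ} (hμ : Integrable (fun y : ℝ => y) μ)
    (hν : Integrable (fun y : ℝ => y) ν) {γ : Measure (ℝ × ℝ)} (h1 : γ.map Prod.fst = μ)
    (h2 : γ.map Prod.snd = ν) : Integrable (fun p => |p.1 - p.2|) γ := by
  subst h1 h2
  exact ((hμ.comp_measurable measurable_fst).sub (hν.comp_measurable measurable_snd)).abs

lemma W1R_attained (μ ν : Measure ℝ) [IsProbabilityMeasure μ] [IsProbabilityMeasure ν]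
    (hμ : Integrable (fun y : ℝ => y) μ) (hν : Integrable (fun y : ℝ => y) ν) :
    ∃ γ : Measure (ℝ × ℝ), IsProbabilityMeasure γ ∧ γ.map Prod.fst = μ ∧
      γ.map Prod.snd = ν ∧ ∫ p, |p.1 - p.2| ∂γ = W1R μ ν := by
  have hae := (qf_aem μ).prodMk (qf_aem ν)
  have hp : IsProbabilityMeasure (uu.map (fun u => (qf μ u, qf ν u))) :=
    Measure.isProbabilityMeasure_map hae
  have m1 : (uu.map (fun u => (qf μ u, qf ν u))).map Prod.fst = μ := by
    rw [AEMeasurable.map_map_of_aemeasurable measurable_fst.aemeasurable hae]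
    exact qf_map μ
  have m2 : (uu.map (fun u => (qf μ u, qf ν u))).map Prod.snd = ν := by
    rw [AEMeasurable.map_map_of_aemeasurable measurable_snd.aemeasurable hae]
    exact qf_map ν
  refine ⟨_, hp, m1, m2, ?_⟩
  symm
  apply IsLeast.csInf_eq
  refine ⟨⟨_, hp, m1, m2, integrable_cpl hμ hν m1 m2, rfl⟩, ?_⟩
  rintro _ ⟨γ, hγ, g1, g2, gi, rfl⟩
  rw [integral_eq_lintegral_of_nonneg_ae (ae_of_all _ fun _ => abs_nonneg _)
      (integrable_cpl hμ hν m1 m2).1,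
    integral_eq_lintegral_of_nonneg_ae (ae_of_all _ fun _ => abs_nonneg _) gi.1]
  apply ENNReal.toReal_mono
  · exact (gi.lintegral_lt_top).ne
  · rw [lint_dist, lint_dist]
    exact lintegral_mono fun z => DD_qf μ ν γ g1 g2 z

open unitInterval in
lemma exists_g (μ ν : Measure ℝ) [IsProbabilityMeasure μ] [IsProbabilityMeasure ν]
    (hμ : Integrable (fun y : ℝ => y) μ) (hν : Integrable (fun y : ℝ => y) ν) :
    ∃ g : ℝ × I → ℝ, Measurable g ∧ (μ.prod volume).map g = ν ∧
      Integrable (fun p : ℝ × I => |g p - p.1|) (μ.prod volume) ∧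
      ∫ p : ℝ × I, |g p - p.1| ∂(μ.prod volume) = W1R ν μ := by
  obtain ⟨γ, hγ, g1, g2, gW⟩ := W1R_attained ν μ hν hμ
  set ρ := γ.map Prod.swap with hρ
  have : IsProbabilityMeasure ρ := Measure.isProbabilityMeasure_map measurable_swap.aemeasurable
  have r1 : ρ.fst = μ := by rw [hρ, Measure.fst, Measure.map_map measurable_fst measurable_swap]; exact g2
  obtain ⟨f, hf, hfm⟩ := Kernel.exists_measurable_map_eq_unitInterval ρ.condKernel
  have hf2 : Measurable fun p : ℝ × I => (p.1, f p.1 p.2) :=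
    measurable_fst.prodMk hf
  have key : (μ.prod (volume : Measure I)).map (fun p => (p.1, f p.1 p.2)) = ρ := by
    conv_rhs => rw [← ρ.disintegrate ρ.condKernel, r1]
    ext s hs
    rw [Measure.map_apply hf2 hs, Measure.prod_apply (hf2 hs), Measure.compProd_apply hs]
    refine lintegral_congr fun a => ?_
    rw [← hfm, Measure.map_apply (hf.of_uncurry_left) (measurable_prodMk_left hs)]
    rfl
  have key2 : (μ.prod (volume : Measure I)).map (fun p => (f p.1 p.2, p.1)) = γ := by
    have : γ = ρ.map Prod.swap := by
      rw [hρ, Measure.map_map measurable_swap measurable_swap]; simp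
    rw [this, ← key, Measure.map_map measurable_swap hf2]; rfl
  have hf3 : Measurable fun p : ℝ × I => (f p.1 p.2, p.1) := by fun_prop
  refine ⟨fun p => f p.1 p.2, hf, ?_, ?_, ?_⟩
  · rw [← g1, ← key2, Measure.map_map measurable_fst hf3]; rfl
  · have := integrable_cpl hν hμ g1 g2
    rw [← key2] at this
    exact this.comp_measurable hf3
  · rw [← gW, ← key2, integral_map hf3.aemeasurable (by fun_prop)]
end Aux
section Aux2
open ProbabilityTheory Set Topology

lemma pull_out {Ω : Type*} {m m0 : MeasurableSpace Ω} (hm : m ≤ m0) (π : @Measure Ω m0)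
    [IsProbabilityMeasure π] (h f k : Ω → ℝ) (hh : Measurable[m] h) (hb : ∀ x, |h x| ≤ 1)
    (hf : Integrable f π) (hk : Integrable k π) :
    ∫ x, h x * (f x - k x) ∂π = ∫ x, h x * ((π[f | m]) x - k x) ∂π := by
  have hhs : StronglyMeasurable[m] h := hh.stronglyMeasurable
  have hb' : ∀ᵐ x ∂π, ‖h x‖ ≤ 1 := ae_of_all _ hb
  have h0 : AEStronglyMeasurable h π := (hhs.mono hm).aestronglyMeasurable
  have i1 : Integrable (fun x => h x * f x) π := hf.bdd_mul h0 hb'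
  have i2 : Integrable (fun x => h x * k x) π := hk.bdd_mul h0 hb'
  have i3 : Integrable (fun x => h x * (π[f | m]) x) π := integrable_condExp.bdd_mul h0 hb'
  simp only [mul_sub]
  rw [integral_sub i1 i2, integral_sub i3 i2]
  congr 1
  have e := condExp_stronglyMeasurable_mul_of_bound hm hhs hf 1 hb'
  rw [← integral_condExp hm]
  exact integral_congr_ae e

lemma past_le (T d t : ℕ) : pastSigma T d t ≤ (inferInstance : MeasurableSpace (Path T d)) := by
  refine iSup_le fun s => iSup_le fun _ => ?_
  exact (measurable_pi_apply s).comap_le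

lemma past_eval {T d : ℕ} (t : ℕ) (s : Fin T) (hs : (s : ℕ) ≤ t) :
    Measurable[pastSigma T d t] (fun x : Path T d => x s) := by
  rw [measurable_iff_comap_le]
  exact le_iSup_of_le s (le_iSup_of_le hs le_rfl)

lemma past_map {T d : ℕ} (t : ℕ) (φ : Fin T → (Fin d → ℝ) → (Fin d → ℝ))
    (hφ : ∀ s, Measurable (φ s)) :
    Measurable[pastSigma T d t, pastSigma T d t] (fun x : Path T d => fun s => φ s (x s)) := by
  rw [measurable_iff_comap_le]
  conv_lhs => rw [pastSigma]
  simp only [MeasurableSpace.comap_iSup, MeasurableSpace.comap_comp]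
  refine iSup_le fun s => iSup_le fun hs => ?_
  rw [← measurable_iff_comap_le]
  exact (hφ s).comp (past_eval t s hs)

open unitInterval

lemma defect {T d : ℕ} (π : Measure (Path T d)) [IsProbabilityMeasure π]
    (hπ : ∀ t i, Integrable (fun x : Path T d => x t i) π)
    {U : Type*} [MeasurableSpace U] (ν : Measure U) [IsProbabilityMeasure ν]
    (φ : U → Fin T → (Fin d → ℝ) → (Fin d → ℝ))
    (hφ : ∀ u s, Measurable (φ u s))
    (Y : Path T d × U → Path T d) (hY : Measurable Y) (hYφ : ∀ x u, Y (x, u) = fun s => φ u s (x s))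
    (hYi : ∀ t i, Integrable (fun p => |Y p t i - p.1 t i|) (π.prod ν))
    (t : ℕ) (ht : t + 1 < T) (i : Fin d) :
    Integrable (fun x => |condNext ((π.prod ν).map Y) t ht i x - x ⟨t, Nat.lt_of_succ_lt ht⟩ i|)
      ((π.prod ν).map Y) ∧
    ∫ x, |condNext ((π.prod ν).map Y) t ht i x - x ⟨t, Nat.lt_of_succ_lt ht⟩ i|
      ∂((π.prod ν).map Y) ≤
    ∫ x, |condNext π t ht i x - x ⟨t, Nat.lt_of_succ_lt ht⟩ i| ∂π +
      ∫ p, |Y p ⟨t + 1, ht⟩ i - p.1 ⟨t + 1, ht⟩ i| ∂(π.prod ν) +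
      ∫ p, |Y p ⟨t, Nat.lt_of_succ_lt ht⟩ i - p.1 ⟨t, Nat.lt_of_succ_lt ht⟩ i| ∂(π.prod ν) := by
  set π' := (π.prod ν).map Y with hπ'
  have : IsProbabilityMeasure π' := Measure.isProbabilityMeasure_map hY.aemeasurable
  set s0 : Fin T := ⟨t, Nat.lt_of_succ_lt ht⟩ with hs0
  set s1 : Fin T := ⟨t + 1, ht⟩ with hs1
  have em : ∀ s : Fin T, Measurable (fun x : Path T d => x s i) := fun s => by fun_prop
  have Xi : ∀ s, Integrable (fun p : Path T d × U => p.1 s i) (π.prod ν) :=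
    fun s => (hπ s i).comp_fst ν
  have YXi : ∀ s, Integrable (fun p : Path T d × U => Y p s i - p.1 s i) (π.prod ν) := by
    intro s
    have hmm : Measurable (fun p : Path T d × U => Y p s i - p.1 s i) :=
      ((em s).comp hY).sub ((em s).comp measurable_fst)
    exact (integrable_norm_iff hmm.aestronglyMeasurable).1 (hYi s i)
  have Yi : ∀ s, Integrable (fun p : Path T d × U => Y p s i) (π.prod ν) := by
    intro s
    have := (YXi s).add (Xi s)
    refine this.congr (ae_of_all _ fun p => ?_)
    simp
  have hπ'i : ∀ s, Integrable (fun x : Path T d => x s i) π' := by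
    intro s
    rw [hπ', integrable_map_measure (em s).aestronglyMeasurable hY.aemeasurable]
    exact Yi s
  have hDi : Integrable (fun x => condNext π' t ht i x - x s0 i) π' :=
    integrable_condExp.sub (hπ'i s0)
  refine ⟨hDi.abs, ?_⟩
  set D : Path T d → ℝ := fun x => condNext π' t ht i x - x s0 i with hD
  have hDm : Measurable[pastSigma T d t] D := by
    refine Measurable.sub ?_ ?_
    · exact stronglyMeasurable_condExp.measurable
    · exact (measurable_pi_apply i).comp (past_eval t s0 le_rfl)
  set h : Path T d → ℝ := fun x => if 0 ≤ D x then 1 else -1 with hh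
  have hm : Measurable[pastSigma T d t] h := by
    refine Measurable.ite ?_ measurable_const measurable_const
    exact hDm measurableSet_Ici
  have hb : ∀ x, |h x| ≤ 1 := by
    intro x
    simp only [hh]
    split_ifs <;> simp
  have hm0 : Measurable h := hm.mono (past_le T d t) le_rfl
  have habs : ∀ x, |D x| = h x * D x := by
    intro x
    simp only [hh]
    split_ifs with h0
    · rw [abs_of_nonneg h0, one_mul]
    · rw [abs_of_neg (not_le.1 h0)]; ring
  have iXh : Integrable (fun p : Path T d × U => h (Y p) * (p.1 s1 i - p.1 s0 i)) (π.prod ν) :=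
    ((Xi s1).sub (Xi s0)).bdd_mul (hm0.comp hY).aestronglyMeasurable (ae_of_all _ fun p => hb _)
  have iYh : Integrable (fun p : Path T d × U => h (Y p) * (Y p s1 i - Y p s0 i)) (π.prod ν) :=
    ((Yi s1).sub (Yi s0)).bdd_mul (hm0.comp hY).aestronglyMeasurable (ae_of_all _ fun p => hb _)
  have hci : Integrable (fun x => |condNext π t ht i x - x s0 i|) π :=
    (integrable_condExp.sub (hπ s0 i)).abs
  have step : ∫ p, h (Y p) * (p.1 s1 i - p.1 s0 i) ∂(π.prod ν) ≤
      ∫ x, |condNext π t ht i x - x s0 i| ∂π := by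
    rw [integral_prod_symm _ iXh]
    calc _ ≤ ∫ _ : U, (∫ x, |condNext π t ht i x - x s0 i| ∂π) ∂ν := by
          refine integral_mono iXh.integral_prod_right (integrable_const _) fun u => ?_
          have hum : Measurable[pastSigma T d t] (fun x => h (Y (x, u))) := by
            simp only [hYφ]
            exact hm.comp (past_map t (φ u) (hφ u))
          simp only
          rw [pull_out (past_le T d t) π (fun x => h (Y (x, u))) (fun x => x s1 i)
            (fun x => x s0 i) hum (fun x => hb _) (hπ s1 i) (hπ s0 i)]
          refine integral_mono ?_ hci fun x => ?_
          · exact (integrable_condExp.sub (hπ s0 i)).bdd_mul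
              (hum.mono (past_le T d t) le_rfl).aestronglyMeasurable (ae_of_all _ fun p => hb _)
          · refine (le_abs_self _).trans ?_
            rw [abs_mul]
            exact mul_le_of_le_one_left (abs_nonneg _) (hb _)
      _ = _ := by simp
  calc ∫ x, |D x| ∂π' = ∫ x, h x * D x ∂π' := by simp only [habs]
    _ = ∫ x, h x * (x s1 i - x s0 i) ∂π' :=
        (pull_out (past_le T d t) π' h (fun x => x s1 i)
            (fun x => x s0 i) hm hb (hπ'i s1) (hπ'i s0)).symm
    _ = ∫ p, h (Y p) * (Y p s1 i - Y p s0 i) ∂(π.prod ν) := by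
        rw [hπ', integral_map hY.aemeasurable]
        exact (hm0.mul ((em s1).sub (em s0))).aestronglyMeasurable
    _ ≤ ∫ p, (h (Y p) * (p.1 s1 i - p.1 s0 i) + |Y p s1 i - p.1 s1 i| + |Y p s0 i - p.1 s0 i|)
          ∂(π.prod ν) := by
        refine integral_mono iYh ((iXh.add (hYi s1 i)).add (hYi s0 i)) fun p => ?_
        have a1 : h (Y p) * (Y p s1 i - p.1 s1 i) ≤ |Y p s1 i - p.1 s1 i| := by
          refine (le_abs_self _).trans ?_
          rw [abs_mul]
          exact mul_le_of_le_one_left (abs_nonneg _) (hb _)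
        have a2 : -(h (Y p) * (Y p s0 i - p.1 s0 i)) ≤ |Y p s0 i - p.1 s0 i| := by
          refine (neg_le_abs _).trans ?_
          rw [abs_mul]
          exact mul_le_of_le_one_left (abs_nonneg _) (hb _)
        simp only
        linarith
    _ = ∫ p, h (Y p) * (p.1 s1 i - p.1 s0 i) ∂(π.prod ν) + ∫ p, |Y p s1 i - p.1 s1 i| ∂(π.prod ν)
          + ∫ p, |Y p s0 i - p.1 s0 i| ∂(π.prod ν) := by
        have e1 := integral_add (iXh.add (hYi s1 i)) (hYi s0 i)
        have e2 := integral_add iXh (hYi s1 i)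
        simp only [Pi.add_apply] at e1
        rw [e1, e2]
    _ ≤ _ := by gcongr

lemma marg_integrable {T d : ℕ} {μ : Fin T → Fin d → Measure ℝ}
    (hmom : ∀ t i, Integrable (fun y : ℝ => y) (μ t i)) {π : Measure (Path T d)}
    (h : HasMarginals π μ) (t : Fin T) (i : Fin d) : Integrable (fun x : Path T d => x t i) π := by
  have := hmom t i
  rw [← h t i] at this
  exact this.comp_measurable (by fun_prop)

lemma coupling {T d : ℕ} (μ μ' : Fin T → Fin d → Measure ℝ)
    (hprob : ∀ t i, IsProbabilityMeasure (μ t i))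
    (hprob' : ∀ t i, IsProbabilityMeasure (μ' t i))
    (hmom : ∀ t i, Integrable (fun y : ℝ => y) (μ t i))
    (hmom' : ∀ t i, Integrable (fun y : ℝ => y) (μ' t i))
    (ε : ℝ) (w : ℝ) (hw : ∀ t, ∑ i, W1R (μ' t i) (μ t i) ≤ w)
    (π : Measure (Path T d)) (hπ : π ∈ MartSetEps μ ε) :
    ∃ π' ∈ MartSetEps μ' (ε + 2 * w), ∃ P : Measure (Path T d × Path T d),
      P.map Prod.fst = π ∧ P.map Prod.snd = π' ∧
      (∀ t i, Integrable (fun p => |p.2 t i - p.1 t i|) P) ∧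
      ∀ t i, ∫ p, |p.2 t i - p.1 t i| ∂P = W1R (μ' t i) (μ t i) := by
  obtain ⟨hp, hM, hdef⟩ := hπ
  choose g gm gmap gint gW using fun t i => exists_g (μ t i) (μ' t i) (hmom t i) (hmom' t i)
  let ν : Measure (Fin T → Fin d → I) := Measure.pi fun _ => Measure.pi fun _ => volume
  let φ : (Fin T → Fin d → I) → Fin T → (Fin d → ℝ) → (Fin d → ℝ) :=
    fun u s x i => g s i (x i, u s i)
  let Y : Path T d × (Fin T → Fin d → I) → Path T d := fun p s => φ p.2 s (p.1 s)
  have hφ : ∀ u s, Measurable (φ u s) := by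
    intro u s
    refine measurable_pi_lambda _ fun i => (gm s i).comp (by fun_prop)
  have hY : Measurable Y := by
    refine measurable_pi_lambda _ fun s => measurable_pi_lambda _ fun i => (gm s i).comp (by fun_prop)
  have mp : ∀ t i, MeasurePreserving (fun p : Path T d × (Fin T → Fin d → I) => (p.1 t i, p.2 t i))
      (π.prod ν) ((μ t i).prod volume) := by
    intro t i
    have h1 : MeasurePreserving (fun x : Path T d => x t i) π (μ t i) := ⟨by fun_prop, hM t i⟩
    have h2 : MeasurePreserving (fun u : Fin T → Fin d → I => u t i) ν volume :=
      (measurePreserving_eval (fun _ : Fin d => (volume : Measure I)) i).comp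
        (measurePreserving_eval (fun _ : Fin T => Measure.pi fun _ : Fin d => (volume : Measure I)) t)
    exact h1.prod h2
  have hYi : ∀ t i, Integrable (fun p => |Y p t i - p.1 t i|) (π.prod ν) := by
    intro t i
    exact (mp t i).integrable_comp_of_integrable (gint t i)
  have hYW : ∀ t i, ∫ p, |Y p t i - p.1 t i| ∂(π.prod ν) = W1R (μ' t i) (μ t i) := by
    intro t i
    rw [← gW t i, ← (mp t i).map_eq, integral_map (mp t i).aemeasurable]
    rw [(mp t i).map_eq]
    exact (gint t i).1
  have hpair : Measurable fun p : Path T d × (Fin T → Fin d → I) => (p.1, Y p) :=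
    measurable_fst.prodMk hY
  have hπi := marg_integrable hmom hM
  refine ⟨(π.prod ν).map Y, ⟨Measure.isProbabilityMeasure_map hY.aemeasurable, ?_, ?_⟩,
    (π.prod ν).map (fun p => (p.1, Y p)), ?_, ?_, ?_, ?_⟩
  · intro t i
    rw [Measure.map_map (by fun_prop) hY, ← gmap t i, ← (mp t i).map_eq,
      Measure.map_map (gm t i) (mp t i).measurable]
    rfl
  · intro t ht
    have key := defect π hπi ν φ hφ Y hY (fun _ _ => rfl) hYi t ht
    rw [integral_finsetSum _ fun i _ => (key i).1]
    calc _ ≤ ∑ i, (∫ x, |condNext π t ht i x - x ⟨t, Nat.lt_of_succ_lt ht⟩ i| ∂π +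
          W1R (μ' ⟨t + 1, ht⟩ i) (μ ⟨t + 1, ht⟩ i) +
          W1R (μ' ⟨t, Nat.lt_of_succ_lt ht⟩ i) (μ ⟨t, Nat.lt_of_succ_lt ht⟩ i)) := by
          refine Finset.sum_le_sum fun i _ => ?_
          rw [← hYW, ← hYW]
          exact (key i).2
      _ ≤ ε + 2 * w := by
          rw [Finset.sum_add_distrib, Finset.sum_add_distrib]
          have e1 := hdef t ht
          rw [integral_finsetSum] at e1
          · have := hw ⟨t + 1, ht⟩
            have := hw ⟨t, Nat.lt_of_succ_lt ht⟩
            linarith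
          · intro i _
            exact (integrable_condExp.sub (hπi _ i)).abs
  · rw [Measure.map_map measurable_fst hpair]
    change (π.prod ν).map Prod.fst = π
    simp
  · rw [Measure.map_map measurable_snd hpair]
    rfl
  · intro t i
    rw [integrable_map_measure (by fun_prop) hpair.aemeasurable]
    exact hYi t i
  · intro t i
    rw [integral_map hpair.aemeasurable (by fun_prop)]
    exact hYW t i

lemma cost_cont {T d : ℕ} {c : Path T d → ℝ} {L : ℝ} (hc : LipschitzCost L c) : Continuous c := by
  rw [continuous_iff_continuousAt]
  intro x
  refine tendsto_iff_dist_tendsto_zero.2 ?_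
  have h0 : Tendsto (fun y : Path T d => L * ∑ t, ∑ i, |y t i - x t i|) (𝓝 x) (𝓝 0) := by
    have : Continuous (fun y : Path T d => L * ∑ t, ∑ i, |y t i - x t i|) := by fun_prop
    simpa using this.tendsto x
  exact squeeze_zero (fun _ => dist_nonneg) (fun y => hc y x) h0

lemma cost_int {T d : ℕ} {c : Path T d → ℝ} {L : ℝ} (hc : LipschitzCost L c)
    {π : Measure (Path T d)} [IsProbabilityMeasure π]
    (hπ : ∀ t i, Integrable (fun x : Path T d => x t i) π) : Integrable c π ∧
      |∫ x, c x ∂π - c 0| ≤ L * ∑ t, ∑ i, ∫ x, |x t i| ∂π := by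
  have hs : Integrable (fun x : Path T d => L * ∑ t, ∑ i, |x t i|) π :=
    (integrable_finsetSum _ fun t _ => integrable_finsetSum _ fun i _ => (hπ t i).abs).const_mul _
  have hb : ∀ x, |c x - c 0| ≤ L * ∑ t, ∑ i, |x t i| := fun x => by simpa using hc x 0
  have hi : Integrable (fun x => c x - c 0) π := by
    refine hs.mono' ?_ (ae_of_all _ hb)
    exact ((cost_cont hc).sub continuous_const).aestronglyMeasurable
  have hi' : Integrable c π := by
    refine (hi.add (integrable_const (c 0))).congr (ae_of_all _ fun x => ?_)
    simp
  refine ⟨hi', ?_⟩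
  have e : ∫ x, c x ∂π - c 0 = ∫ x, (c x - c 0) ∂π := by
    rw [integral_sub hi' (integrable_const _)]; simp
  rw [e]
  refine (abs_integral_le_integral_abs).trans ?_
  refine (integral_mono hi.abs hs hb).trans ?_
  rw [integral_const_mul, integral_finsetSum _ fun t _ => integrable_finsetSum _ fun i _ => (hπ t i).abs]
  refine le_of_eq ?_
  congr 1
  refine Finset.sum_congr rfl fun t _ => ?_
  rw [integral_finsetSum _ fun i _ => (hπ t i).abs]

lemma cost_diff {T d : ℕ} {c : Path T d → ℝ} {L : ℝ} (hc : LipschitzCost L c)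
    {P : Measure (Path T d × Path T d)}
    (h1 : Integrable c (P.map Prod.fst)) (h2 : Integrable c (P.map Prod.snd))
    (hi : ∀ t i, Integrable (fun p => |p.2 t i - p.1 t i|) P) :
    |∫ x, c x ∂(P.map Prod.snd) - ∫ x, c x ∂(P.map Prod.fst)| ≤
      L * ∑ t, ∑ i, ∫ p, |p.2 t i - p.1 t i| ∂P := by
  have cc := (cost_cont hc)
  rw [integral_map measurable_snd.aemeasurable cc.aestronglyMeasurable,
    integral_map measurable_fst.aemeasurable cc.aestronglyMeasurable]
  have i1 := h1.comp_measurable measurable_fst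
  have i2 := h2.comp_measurable measurable_snd
  have hs : Integrable (fun p : Path T d × Path T d => L * ∑ t, ∑ i, |p.2 t i - p.1 t i|) P :=
    (integrable_finsetSum _ fun t _ => integrable_finsetSum _ fun i _ => hi t i).const_mul _
  have e := integral_sub i2 i1
  simp only [Function.comp] at e
  rw [← e]
  refine (abs_integral_le_integral_abs).trans ?_
  refine (integral_mono (i2.sub i1).abs hs fun p => hc p.2 p.1).trans ?_
  rw [integral_const_mul, integral_finsetSum _ fun t _ => integrable_finsetSum _ fun i _ => hi t i]
  refine le_of_eq ?_
  congr 1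
  refine Finset.sum_congr rfl fun t _ => ?_
  rw [integral_finsetSum _ fun i _ => hi t i]

lemma vals_bdd {T d : ℕ} {c : Path T d → ℝ} {L : ℝ} (hc : LipschitzCost L c)
    {μ : Fin T → Fin d → Measure ℝ} (hmom : ∀ t i, Integrable (fun y : ℝ => y) (μ t i)) (ε : ℝ) :
    ∃ B, ∀ v ∈ primalVals c (MartSetEps μ ε), |v - c 0| ≤ B := by
  refine ⟨L * ∑ t, ∑ i, ∫ y, |y| ∂(μ t i), ?_⟩
  rintro _ ⟨π, ⟨hp, hM, -⟩, -, rfl⟩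
  have := (cost_int hc (marg_integrable hmom hM)).2
  convert this using 6 with t _ i _
  rw [← hM t i, integral_map (Measurable.aemeasurable (by fun_prop)) (by fun_prop)]

lemma exists_val {T d : ℕ} {μ μ' : Fin T → Fin d → Measure ℝ}
    (hprob : ∀ t i, IsProbabilityMeasure (μ t i))
    (hprob' : ∀ t i, IsProbabilityMeasure (μ' t i))
    (hmom : ∀ t i, Integrable (fun y : ℝ => y) (μ t i))
    (hmom' : ∀ t i, Integrable (fun y : ℝ => y) (μ' t i))
    {ε : ℝ} {w : ℝ} (hw : ∀ t, ∑ i, W1R (μ' t i) (μ t i) ≤ w)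
    {c : Path T d → ℝ} {L : ℝ} (hL : 0 ≤ L) (hc : LipschitzCost L c) :
    ∀ v ∈ primalVals c (MartSetEps μ ε), ∃ v' ∈ primalVals c (MartSetEps μ' (ε + 2 * w)),
      |v' - v| ≤ L * T * w := by
  rintro _ ⟨π, hπ, hcπ, rfl⟩
  obtain ⟨π', hπ', P, rfl, rfl, hi, hW⟩ := coupling μ μ' hprob hprob' hmom hmom' ε w hw π hπ
  have := hπ'.1
  have h2 := (cost_int hc (marg_integrable hmom' hπ'.2.1)).1
  refine ⟨_, ⟨_, hπ', h2, rfl⟩, ?_⟩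
  refine (cost_diff hc hcπ h2 hi).trans ?_
  rw [mul_assoc]
  refine mul_le_mul_of_nonneg_left ?_ hL
  simp only [hW]
  refine (Finset.sum_le_sum fun t _ => hw t).trans ?_
  simp

lemma main_bound {T d : ℕ} {μ μ' : Fin T → Fin d → Measure ℝ}
    (hprob : ∀ t i, IsProbabilityMeasure (μ t i))
    (hprob' : ∀ t i, IsProbabilityMeasure (μ' t i))
    (hmom : ∀ t i, Integrable (fun y : ℝ => y) (μ t i))
    (hmom' : ∀ t i, Integrable (fun y : ℝ => y) (μ' t i))
    {ε : ℝ} (hne : (MartSetEps μ ε).Nonempty)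
    {w : ℝ} (hw : ∀ t, ∑ i, W1R (μ' t i) (μ t i) ≤ w)
    {c : Path T d → ℝ} {L : ℝ} (hL : 0 ≤ L) (hc : LipschitzCost L c) :
      PbarEps μ c ε ≤ PbarEps μ' c (ε + 2 * w) + L * T * w ∧
      PlowEps μ' c (ε + 2 * w) - L * T * w ≤ PlowEps μ c ε := by
  have hv : (primalVals c (MartSetEps μ ε)).Nonempty := by
    obtain ⟨π, hπ⟩ := hne
    have := hπ.1
    exact ⟨_, π, hπ, (cost_int hc (marg_integrable hmom hπ.2.1)).1, rfl⟩
  obtain ⟨B, hB⟩ := vals_bdd hc hmom' (ε + 2 * w)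
  have key := exists_val hprob hprob' hmom hmom' (ε := ε) hw hL hc
  constructor
  · refine csSup_le hv fun v hvv => ?_
    obtain ⟨v', hv', hd⟩ := key v hvv
    have hbd : BddAbove (primalVals c (MartSetEps μ' (ε + 2 * w))) :=
      ⟨c 0 + B, fun z hz => by have := (abs_le.1 (hB z hz)).2; linarith⟩
    have h1 : v' ≤ PbarEps μ' c (ε + 2 * w) := le_csSup hbd hv'
    have := (abs_le.1 hd).1
    linarith
  · refine le_csInf hv fun v hvv => ?_
    obtain ⟨v', hv', hd⟩ := key v hvv
    have hbd : BddBelow (primalVals c (MartSetEps μ' (ε + 2 * w))) :=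
      ⟨c 0 - B, fun z hz => by have := (abs_le.1 (hB z hz)).1; linarith⟩
    have h1 : PlowEps μ' c (ε + 2 * w) ≤ v' := csInf_le hbd hv'
    have := (abs_le.1 hd).2
    linarith
end Aux2

/-- Proposition: stability of the relaxed problems.
If `ℳ_ε(μ̌) ≠ ∅` and `r = 2 max_t Σ_i 𝒲₁(μ'_{t,i}, μ_{t,i})`, then `ℳ_{ε+r}(μ̌') ≠ ∅`, and for
every `L`-Lipschitz cost `c` one has `P̄_ε(μ̌) ≤ P̄_{ε+r}(μ̌') + LTr/2` and
`P̲_ε(μ̌) ≥ P̲_{ε+r}(μ̌') − LTr/2`. -/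
theorem mmot_approx {T d : ℕ} (hT : 0 < T) (μ μ' : Fin T → Fin d → Measure ℝ)
    (hprob : ∀ t i, IsProbabilityMeasure (μ t i))
    (hprob' : ∀ t i, IsProbabilityMeasure (μ' t i))
    (hmom : ∀ t i, Integrable (fun y : ℝ => y) (μ t i))
    (hmom' : ∀ t i, Integrable (fun y : ℝ => y) (μ' t i))
    (ε : ℝ) (hε : 0 ≤ ε) (hne : (MartSetEps μ ε).Nonempty)
    (r : ℝ)
    (hr : r = 2 * Finset.univ.sup' ⟨⟨0, hT⟩, Finset.mem_univ _⟩
      (fun t => ∑ i, W1R (μ' t i) (μ t i))) :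
    (MartSetEps μ' (ε + r)).Nonempty ∧
    ∀ (c : Path T d → ℝ) (L : ℝ), LipschitzCost L c →
      PbarEps μ c ε ≤ PbarEps μ' c (ε + r) + L * T * r / 2 ∧
      PlowEps μ' c (ε + r) - L * T * r / 2 ≤ PlowEps μ c ε := by
  set w := Finset.univ.sup' ⟨⟨0, hT⟩, Finset.mem_univ _⟩
      (fun t => ∑ i, W1R (μ' t i) (μ t i)) with hwdef
  have hw : ∀ t, ∑ i, W1R (μ' t i) (μ t i) ≤ w := fun t =>
    Finset.le_sup' (fun t => ∑ i, W1R (μ' t i) (μ t i)) (Finset.mem_univ t)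
  subst hr
  refine ⟨?_, ?_⟩
  · obtain ⟨π, hπ⟩ := hne
    obtain ⟨π', hπ', -⟩ := coupling μ μ' hprob hprob' hmom hmom' ε w hw π hπ
    exact ⟨π', hπ'⟩
  · intro c L hc
    rcases le_or_gt 0 L with hL | hL
    · have := main_bound hprob hprob' hmom hmom' hne hw hL hc
      have e : L * T * (2 * w) / 2 = L * T * w := by ring
      rw [e]
      exact this
    · have hd : IsEmpty (Fin d) := by
        refine ⟨fun i => ?_⟩
        have h1 := hc (fun _ _ => 1) 0
        have h2 : (0 : ℝ) < ∑ t : Fin T, ∑ i : Fin d, |(fun _ _ => 1 : Path T d) t i - (0 : Path T d) t i| := by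
          have hTr : (0 : ℝ) < T := by exact_mod_cast hT
          have hdr : (0 : ℝ) < d := by exact_mod_cast i.pos
          simp
          positivity
        have h3 := abs_nonneg (c (fun _ _ => 1) - c 0)
        nlinarith
      have hw0 : w = 0 := by
        apply le_antisymm
        · exact Finset.sup'_le _ _ fun t _ => by simp
        · have := hw ⟨0, hT⟩
          simpa only [Finset.univ_eq_empty, Finset.sum_empty] using this
      have hc0 : LipschitzCost 0 c := by
        intro x y
        have : x = y := by
          funext t i
          exact hd.elim i
        simp [this]
      have := main_bound hprob hprob' hmom hmom' hne hw le_rfl hc0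
      have e : L * T * (2 * w) / 2 = 0 * T * w := by rw [hw0]; ring
      rw [e]
      exact this

end MMOT
end

section
/- Let μ̌ ∈ 𝒫(ℝ)^{dT} satisfy ℳ(μ̌) ≠ ∅ and let μ̌ⁿ = (μ^n_{t,i}) satisfy r_n := 2 max_{1≤t≤T} Σ_{1≤i≤d} 𝒲₁(μ^n_{t,i}, μ_{t,i}) → 0 as n → ∞. Then for all n ≥ 1, ℳ_{r_n}(μ̌ⁿ) ≠ ∅. Moreover, if c is Lipschitz, then for any sequence (ε_n)_{n≥1} converging to zero with ε_n ≥ r_n for all n ≥ 1, one has lim_{n→∞} P̄_{ε_n}(μ̌ⁿ) = P̄(μ̌) and lim_{n→∞} P̲_{ε_n}(μ̌ⁿ) = P̲(μ̌). -/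
open MeasureTheory Filter

namespace MMOT

def IsMartingaleMeasure {T d : ℕ} (π : Measure (Path T d)) : Prop :=
  ∀ (t : ℕ) (ht : t + 1 < T) (i : Fin d),
    condNext π t ht i =ᵐ[π] fun x => x ⟨t, Nat.lt_of_succ_lt ht⟩ i

/-- The set `ℳ(μ̌)` of calibrated martingale measures. -/
def MartSet {T d : ℕ} (μ : Fin T → Fin d → Measure ℝ) : Set (Measure (Path T d)) :=
  {π | IsProbabilityMeasure π ∧ HasMarginals π μ ∧ IsMartingaleMeasure π}

noncomputable def Pbar {T d : ℕ} (μ : Fin T → Fin d → Measure ℝ) (c : Path T d → ℝ) : ℝ :=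
  sSup (primalVals c (MartSet μ))

noncomputable def Plow {T d : ℕ} (μ : Fin T → Fin d → Measure ℝ) (c : Path T d → ℝ) : ℝ :=
  sInf (primalVals c (MartSet μ))

open ProbabilityTheory in
/-- Prokhorov along the hyperfilter. -/
lemma exists_limit {E : Type*} [NormedAddCommGroup E] [ProperSpace E]
    [MeasurableSpace E] [BorelSpace E] (p : ℕ → ProbabilityMeasure E) (M : ℝ)
    (hi : ∀ n, Integrable (fun x : E => ‖x‖) (p n : Measure E))
    (hM : ∀ n, ∫ x, ‖x‖ ∂(p n : Measure E) ≤ M) :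
    ∃ q : ProbabilityMeasure E, Tendsto p (hyperfilter ℕ : Filter ℕ) (nhds q) := by
  have hK : IsCompact (closure (Set.range p)) := by
    apply isCompact_closure_of_isTightMeasureSet
    apply isTightMeasureSet_of_tendsto_measure_norm_gt
    have h1 : Tendsto (fun r : ℝ => ENNReal.ofReal (M / r)) atTop (nhds 0) := by
      rw [← ENNReal.ofReal_zero]
      exact ENNReal.tendsto_ofReal (tendsto_const_nhds.div_atTop tendsto_id)
    refine tendsto_of_tendsto_of_tendsto_of_le_of_le' tendsto_const_nhds h1
      (Eventually.of_forall fun _ => zero_le) ?_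
    filter_upwards [eventually_gt_atTop 0] with r hr
    refine iSup₂_le ?_
    rintro _ ⟨_, ⟨n, rfl⟩, rfl⟩
    have h2 := mul_meas_ge_le_integral_of_nonneg (μ := (p n : Measure E))
      (Eventually.of_forall fun x => norm_nonneg x) (hi n) r
    have h3 : (p n : Measure E).real {x | r < ‖x‖} ≤ M / r := by
      rw [le_div_iff₀ hr, mul_comm]
      refine le_trans ?_ (h2.trans (hM n))
      refine mul_le_mul_of_nonneg_left ?_ hr.le
      refine measureReal_mono (s₁ := {x : E | r < ‖x‖}) (s₂ := {x : E | r ≤ ‖x‖}) ?_ (measure_ne_top _ _)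
      intro x hx
      simp only [Set.mem_ofPred_eq] at hx ⊢
      exact hx.le
    rw [← ofReal_measureReal]
    exact ENNReal.ofReal_le_ofReal h3
  obtain ⟨q, -, hq⟩ := hK.ultrafilter_le_nhds ((hyperfilter ℕ).map p) (by
    simp only [le_principal_iff, Ultrafilter.coe_map, Filter.mem_map]
    exact Filter.univ_mem' fun n => subset_closure ⟨n, rfl⟩)
  exact ⟨q, hq⟩

lemma abs_sub_integrable {γ : Measure (ℝ × ℝ)} {μ ν : Measure ℝ}
    (h1 : γ.map Prod.fst = μ) (h2 : γ.map Prod.snd = ν)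
    (hμ : Integrable (fun y : ℝ => y) μ) (hν : Integrable (fun y : ℝ => y) ν) :
    Integrable (fun p : ℝ × ℝ => p.1) γ ∧ Integrable (fun p : ℝ × ℝ => p.2) γ := by
  subst h1 h2
  exact ⟨hμ.comp_measurable measurable_fst, hν.comp_measurable measurable_snd⟩

lemma exists_opt (μ ν : Measure ℝ) [IsProbabilityMeasure μ] [IsProbabilityMeasure ν]
    (hμ : Integrable (fun y : ℝ => y) μ) (hν : Integrable (fun y : ℝ => y) ν) :
    ∃ γ : Measure (ℝ × ℝ), IsProbabilityMeasure γ ∧ γ.map Prod.fst = μ ∧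
    γ.map Prod.snd = ν ∧ Integrable (fun p => |p.1 - p.2|) γ ∧
     ∫ p, |p.1 - p.2| ∂γ = W1R μ ν := by
  set S := {r | ∃ γ : Measure (ℝ × ℝ), IsProbabilityMeasure γ ∧ γ.map Prod.fst = μ ∧
    γ.map Prod.snd = ν ∧ Integrable (fun p => |p.1 - p.2|) γ ∧
    r = ∫ p, |p.1 - p.2| ∂γ} with hS
  have hW : W1R μ ν = sInf S := rfl
  have hne : S.Nonempty := by
    refine ⟨_, μ.prod ν, inferInstance, by simp, by simp, ?_, rfl⟩
    have := abs_sub_integrable (γ := μ.prod ν) (μ := μ) (ν := ν) (by simp) (by simp) hμ hν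
    exact (this.1.sub this.2).abs
  have hbd : BddBelow S := by
    refine ⟨0, ?_⟩
    rintro _ ⟨γ, -, -, -, -, rfl⟩
    positivity
  obtain ⟨u, -, hu, huS⟩ := exists_seq_tendsto_sInf hne hbd
  choose γ hγp hγ1 hγ2 hγi hγe using huS
  let p : ℕ → ProbabilityMeasure (ℝ × ℝ) := fun n => ⟨γ n, hγp n⟩
  have hint n := abs_sub_integrable (hγ1 n) (hγ2 n) hμ hν
  have hle : ∀ x : ℝ × ℝ, ‖x‖ ≤ |x.1| + |x.2| := by
    intro x
    rw [Prod.norm_def]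
    simp [Real.norm_eq_abs]
  have hi : ∀ n, Integrable (fun x : ℝ × ℝ => ‖x‖) (p n : Measure (ℝ × ℝ)) := by
    intro n
    refine Integrable.mono' ((hint n).1.abs.add (hint n).2.abs)
      (by fun_prop) (Eventually.of_forall fun x => ?_)
    simpa using hle x
  obtain ⟨q, hq⟩ := exists_limit p (∫ y, |y| ∂μ + ∫ y, |y| ∂ν) hi (by
    intro n
    have e1 : ∫ y, |y| ∂μ = ∫ x : ℝ × ℝ, |x.1| ∂(γ n) := by
      rw [← hγ1 n, integral_map (by fun_prop) (by fun_prop)]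
    have e2 : ∫ y, |y| ∂ν = ∫ x : ℝ × ℝ, |x.2| ∂(γ n) := by
      rw [← hγ2 n, integral_map (by fun_prop) (by fun_prop)]
    rw [e1, e2, ← integral_add (hint n).1.abs (hint n).2.abs]
    exact integral_mono (hi n) ((hint n).1.abs.add (hint n).2.abs) hle)
  have hq1 : (q : Measure (ℝ × ℝ)).map Prod.fst = μ := by
    have a := ProbabilityMeasure.tendsto_map_of_tendsto_of_continuous p q hq continuous_fst
    have b : (fun n => (p n).map (f := Prod.fst) (by fun_prop)) =
        fun _ => (⟨μ, inferInstance⟩ : ProbabilityMeasure ℝ) := by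
      funext n; apply Subtype.ext; exact hγ1 n
    rw [b] at a
    have e := tendsto_nhds_unique a tendsto_const_nhds
    exact congrArg Subtype.val e
  have hq2 : (q : Measure (ℝ × ℝ)).map Prod.snd = ν := by
    have a := ProbabilityMeasure.tendsto_map_of_tendsto_of_continuous p q hq continuous_snd
    have b : (fun n => (p n).map (f := Prod.snd) (by fun_prop)) =
        fun _ => (⟨ν, inferInstance⟩ : ProbabilityMeasure ℝ) := by
      funext n; apply Subtype.ext; exact hγ2 n
    rw [b] at a
    have e := tendsto_nhds_unique a tendsto_const_nhds
    exact congrArg Subtype.val e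
  have hqi := abs_sub_integrable hq1 hq2 hμ hν
  have hqi' : Integrable (fun p : ℝ × ℝ => |p.1 - p.2|) (q : Measure (ℝ × ℝ)) :=
    (hqi.1.sub hqi.2).abs
  refine ⟨q, inferInstance, hq1, hq2, hqi', le_antisymm ?_ ?_⟩
  · have hK : ∀ K : ℕ, ∫ x : ℝ × ℝ, min |x.1 - x.2| K ∂(q : Measure (ℝ × ℝ)) ≤ W1R μ ν := by
      intro K
      let f : BoundedContinuousFunction (ℝ × ℝ) ℝ :=
        BoundedContinuousFunction.ofNormedAddCommGroup
          (fun x : ℝ × ℝ => min |x.1 - x.2| K) (by fun_prop) K (by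
            intro x
            rw [Real.norm_eq_abs, abs_of_nonneg (by positivity)]
            exact min_le_right _ _)
      have h1 := (ProbabilityMeasure.tendsto_iff_forall_integral_tendsto.1 hq) f
      refine le_of_tendsto_of_tendsto h1 (hu.mono_left Nat.hyperfilter_le_atTop) ?_
      refine Eventually.of_forall fun n => ?_
      simp only
      rw [hγe n]
      refine integral_mono (f.integrable _) (hγi n) fun x => min_le_left _ _
    have hlim : Tendsto (fun K : ℕ => ∫ x : ℝ × ℝ, min |x.1 - x.2| K ∂(q : Measure (ℝ × ℝ))) atTop
        (nhds (∫ x : ℝ × ℝ, |x.1 - x.2| ∂(q : Measure (ℝ × ℝ)))) := by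
      refine tendsto_integral_of_dominated_convergence _ (fun K => by fun_prop) hqi' ?_ ?_
      · intro K
        refine Eventually.of_forall fun x => ?_
        rw [Real.norm_eq_abs, abs_of_nonneg (by positivity)]
        exact min_le_left _ _
      · refine Eventually.of_forall fun x => ?_
        refine tendsto_const_nhds.congr' ?_
        filter_upwards [eventually_ge_atTop ⌈|x.1 - x.2|⌉₊] with K hK
        exact (min_eq_left (Nat.ceil_le.1 hK)).symm
    exact le_of_tendsto' hlim hK
  · exact csInf_le hbd ⟨q, inferInstance, hq1, hq2, hqi', rfl⟩

section Basics

variable {T d : ℕ}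

lemma pastSigma_le (t : ℕ) : pastSigma T d t ≤ (inferInstance : MeasurableSpace (Path T d)) := by
  refine iSup₂_le fun s _ => ?_
  exact (measurable_pi_apply s).comap_le

/-- increments -/
def incr (t : ℕ) (ht : t + 1 < T) (i : Fin d) (x : Path T d) : ℝ :=
  x ⟨t + 1, ht⟩ i - x ⟨t, Nat.lt_of_succ_lt ht⟩ i

lemma meas_coord_past (t : ℕ) (s : Fin T) (hs : (s : ℕ) ≤ t) :
    Measurable[pastSigma T d t] (fun x : Path T d => x s) := by
  rw [measurable_iff_comap_le]
  exact le_iSup₂ (f := fun (s : Fin T) (_ : (s : ℕ) ≤ t) =>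
    MeasurableSpace.comap (fun x : Path T d => x s) inferInstance) s hs

lemma meas_coord_past' (t : ℕ) (s : Fin T) (hs : (s : ℕ) ≤ t) (i : Fin d) :
    Measurable[pastSigma T d t] (fun x : Path T d => x s i) :=
  (measurable_pi_apply i).comp (meas_coord_past t s hs)

lemma meas_to_past {α : Type*} {m : MeasurableSpace α} (t : ℕ) (F : α → Path T d)
    (h : ∀ s : Fin T, (s : ℕ) ≤ t → Measurable (fun a => F a s)) :
    @Measurable _ _ m (pastSigma T d t) F := by
  rw [measurable_iff_comap_le, pastSigma]
  simp only [MeasurableSpace.comap_iSup, MeasurableSpace.comap_comp]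
  exact iSup₂_le fun s hs => (h s hs).comap_le

lemma coord_integrable {π : Measure (Path T d)} {μ : Fin T → Fin d → Measure ℝ}
    (hπ : HasMarginals π μ) (hmom : ∀ t i, Integrable (fun y : ℝ => y) (μ t i)) (t : Fin T)
    (i : Fin d) : Integrable (fun x : Path T d => x t i) π := by
  have := hmom t i
  rw [← hπ t i] at this
  exact this.comp_measurable (by fun_prop)

lemma incr_integrable {π : Measure (Path T d)} (hi : ∀ t i, Integrable (fun x : Path T d => x t i) π)
    (t : ℕ) (ht : t + 1 < T) (i : Fin d) : Integrable (incr t ht i) π :=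
  (hi _ i).sub (hi _ i)

lemma integral_past_mul {π : Measure (Path T d)} [IsProbabilityMeasure π]
    (hi : ∀ t i, Integrable (fun x : Path T d => x t i) π)
    (t : ℕ) (ht : t + 1 < T) (i : Fin d) (h : Path T d → ℝ) (hm : Measurable[pastSigma T d t] h)
    (C : ℝ) (hC : ∀ x, |h x| ≤ C) :
    ∫ x, h x * incr t ht i x ∂π =
      ∫ x, h x * (condNext π t ht i x - x ⟨t, Nat.lt_of_succ_lt ht⟩ i) ∂π := by
  have hms : StronglyMeasurable[pastSigma T d t] h := hm.stronglyMeasurable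
  have hm' : Measurable h := hm.mono (pastSigma_le t) le_rfl
  have hae : AEStronglyMeasurable h π := hm'.aestronglyMeasurable
  have hbd : ∀ᵐ x ∂π, ‖h x‖ ≤ C := Eventually.of_forall hC
  have i1 : Integrable (fun x => h x * x ⟨t + 1, ht⟩ i) π := (hi _ i).bdd_mul hae hbd
  have i0 : Integrable (fun x => h x * x ⟨t, Nat.lt_of_succ_lt ht⟩ i) π := (hi _ i).bdd_mul hae hbd
  have ic : Integrable (fun x => h x * condNext π t ht i x) π :=
    (integrable_condExp).bdd_mul hae hbd
  simp only [incr, mul_sub]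
  rw [integral_sub i1 i0, integral_sub ic i0]
  congr 1
  have e := condExp_mul_of_stronglyMeasurable_left (μ := π) (m := pastSigma T d t) hms
    (g := fun x => x ⟨t + 1, ht⟩ i) i1 (hi _ i)
  rw [← integral_condExp (pastSigma_le t)]
  exact integral_congr_ae e

lemma defect_integrable {π : Measure (Path T d)}
    (hi : ∀ t i, Integrable (fun x : Path T d => x t i) π)
    (t : ℕ) (ht : t + 1 < T) (i : Fin d) :
    Integrable (fun x => condNext π t ht i x - x ⟨t, Nat.lt_of_succ_lt ht⟩ i) π :=
  Integrable.sub integrable_condExp (hi _ i)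

lemma dual1 {π : Measure (Path T d)} [IsProbabilityMeasure π]
    (hi : ∀ t i, Integrable (fun x : Path T d => x t i) π)
    (t : ℕ) (ht : t + 1 < T) (h : Fin d → Path T d → ℝ)
    (hm : ∀ i, Measurable[pastSigma T d t] (h i)) (C : ℝ)
    (hC : ∀ i x, |h i x| ≤ C) :
    ∫ x, ∑ i, h i x * incr t ht i x ∂π ≤
      C * ∫ x, ∑ i, |condNext π t ht i x - x ⟨t, Nat.lt_of_succ_lt ht⟩ i| ∂π := by
  have hae i : AEStronglyMeasurable (h i) π :=
    ((hm i).mono (pastSigma_le t) le_rfl).aestronglyMeasurable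
  have hbd i : ∀ᵐ x ∂π, ‖h i x‖ ≤ C := Eventually.of_forall (hC i)
  rw [integral_finsetSum _ (fun i _ => (incr_integrable hi t ht i).bdd_mul (hae i) (hbd i)),
    integral_finsetSum _ (fun i _ => (defect_integrable hi t ht i).abs), Finset.mul_sum]
  refine Finset.sum_le_sum fun i _ => ?_
  rw [integral_past_mul hi t ht i (h i) (hm i) C (hC i), ← integral_const_mul]
  refine integral_mono ((defect_integrable hi t ht i).bdd_mul (hae i) (hbd i))
    ((defect_integrable hi t ht i).abs.const_mul C) fun x => ?_
  refine (le_abs_self _).trans ?_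
  rw [abs_mul]
  exact mul_le_mul_of_nonneg_right (hC i x) (abs_nonneg _)

lemma dual2 {π : Measure (Path T d)} [IsProbabilityMeasure π]
    (hi : ∀ t i, Integrable (fun x : Path T d => x t i) π)
    (t : ℕ) (ht : t + 1 < T) : ∃ h : Fin d → Path T d → ℝ,
    (∀ i, Measurable[pastSigma T d t] (h i)) ∧ (∀ i x, |h i x| ≤ 1) ∧
    ∫ x, ∑ i, |condNext π t ht i x - x ⟨t, Nat.lt_of_succ_lt ht⟩ i| ∂π =
    ∫ x, ∑ i, h i x * incr t ht i x ∂π := by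
  let g : Fin d → Path T d → ℝ := fun i x =>
    condNext π t ht i x - x ⟨t, Nat.lt_of_succ_lt ht⟩ i
  have hg i : Measurable[pastSigma T d t] (g i) := by
    apply Measurable.sub
    · exact (stronglyMeasurable_condExp (μ := π) (m := pastSigma T d t)).measurable
    · exact meas_coord_past' t _ le_rfl i
  have hh i : Measurable[pastSigma T d t] (fun x => if 0 ≤ g i x then (1 : ℝ) else -1) := by
    refine Measurable.ite ?_ measurable_const measurable_const
    exact measurableSet_le measurable_const (hg i)
  have hC i x : |if 0 ≤ g i x then (1 : ℝ) else -1| ≤ 1 := by split_ifs <;> simp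
  refine ⟨fun i x => if 0 ≤ g i x then 1 else -1, hh, hC, ?_⟩
  have hae i : AEStronglyMeasurable (fun x => if 0 ≤ g i x then (1 : ℝ) else -1) π :=
    ((hh i).mono (pastSigma_le t) le_rfl).aestronglyMeasurable
  rw [integral_finsetSum _ (fun i _ => (incr_integrable hi t ht i).bdd_mul (hae i)
    (Eventually.of_forall (hC i))),
    integral_finsetSum _ (fun i _ => (defect_integrable hi t ht i).abs)]
  refine Finset.sum_congr rfl fun i _ => ?_
  rw [integral_past_mul hi t ht i _ (hh i) 1 (hC i)]
  refine integral_congr_ae (Eventually.of_forall fun x => ?_)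
  change |g i x| = (if 0 ≤ g i x then 1 else -1) * g i x
  split_ifs with h
  · rw [abs_of_nonneg h, one_mul]
  · rw [abs_of_neg (not_le.1 h)]; ring

/-- truncation -/
def trunc (t : ℕ) (x : Path T d) : Path T d := fun s => if (s : ℕ) ≤ t then x s else 0

lemma trunc_cont (t : ℕ) : Continuous (trunc (T := T) (d := d) t) := by
  unfold trunc
  refine continuous_pi fun s => ?_
  split_ifs <;> fun_prop

lemma trunc_meas (t : ℕ) : Measurable[pastSigma T d t] (trunc (T := T) (d := d) t) := by
  unfold trunc
  refine @measurable_pi_lambda _ _ _ (pastSigma T d t) _ _ fun s => ?_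
  split_ifs with h
  · exact meas_coord_past t s h
  · exact measurable_const

lemma past_le_comap (t : ℕ) : pastSigma T d t ≤
    MeasurableSpace.comap (trunc t) (inferInstance : MeasurableSpace (Path T d)) := by
  refine iSup₂_le fun s hs => ?_
  have : (fun x : Path T d => x s) = (fun x => x s) ∘ trunc t := by
    funext x; simp [trunc, hs]
  rw [this, ← MeasurableSpace.comap_comp]
  exact MeasurableSpace.comap_mono (measurable_pi_apply s).comap_le

lemma mart_of_bcf {π : Measure (Path T d)} [IsProbabilityMeasure π]
    (hi : ∀ t i, Integrable (fun x : Path T d => x t i) π)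
    (t : ℕ) (ht : t + 1 < T) (i : Fin d)
    (H : ∀ h : BoundedContinuousFunction (Path T d) ℝ,
      ∫ x, h (trunc t x) * incr t ht i x ∂π = 0) :
    condNext π t ht i =ᵐ[π] fun x => x ⟨t, Nat.lt_of_succ_lt ht⟩ i := by
  have hD := incr_integrable hi t ht i
  have hDm : Measurable (incr (T := T) (d := d) t ht i) := by unfold incr; fun_prop
  have htm : Measurable (trunc (T := T) (d := d) t) := (trunc_cont t).measurable
  let m1 : Measure (Path T d) := π.withDensity (fun x => ENNReal.ofReal (incr t ht i x))
  let m2 : Measure (Path T d) := π.withDensity (fun x => ENNReal.ofReal (- incr t ht i x))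
  have f1 : IsFiniteMeasure m1 := isFiniteMeasure_withDensity_ofReal hD.2
  have f2 : IsFiniteMeasure m2 := isFiniteMeasure_withDensity_ofReal hD.neg.2
  have e1 (g : Path T d → ℝ) : ∫ x, g x ∂m1 = ∫ x, max (incr t ht i x) 0 * g x ∂π := by
    rw [integral_withDensity_eq_integral_toReal_smul (by fun_prop) (by simp)]
    simp [ENNReal.toReal_ofReal']
  have e2 (g : Path T d → ℝ) : ∫ x, g x ∂m2 = ∫ x, max (- incr t ht i x) 0 * g x ∂π := by
    rw [integral_withDensity_eq_integral_toReal_smul (by fun_prop) (by simp)]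
    simp [ENNReal.toReal_ofReal']
  have key (g : Path T d → ℝ) (hg : Measurable g) (C : ℝ) (hC : ∀ x, |g x| ≤ C) :
      ∫ x, g x ∂m1 - ∫ x, g x ∂m2 = ∫ x, g x * incr t ht i x ∂π := by
    rw [e1, e2, ← integral_sub]
    · refine integral_congr_ae (Eventually.of_forall fun x => ?_)
      simp only
      rcases le_total 0 (incr t ht i x) with h | h
      · rw [max_eq_left h, max_eq_right (by linarith)]; ring
      · rw [max_eq_right h, max_eq_left (by linarith)]; ring
    · exact hD.pos_part.mul_bdd (c := C) hg.aestronglyMeasurable (Eventually.of_forall hC)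
    · exact hD.neg_part.mul_bdd (c := C) hg.aestronglyMeasurable (Eventually.of_forall hC)
  have hmm : m1.map (trunc t) = m2.map (trunc t) := by
    have := Measure.isFiniteMeasure_map m1 (trunc t)
    have := Measure.isFiniteMeasure_map m2 (trunc t)
    refine ext_of_forall_integral_eq_of_IsFiniteMeasure fun f => ?_
    rw [integral_map htm.aemeasurable (by fun_prop), integral_map htm.aemeasurable (by fun_prop)]
    rw [← sub_eq_zero, key (fun x => f (trunc t x)) (by fun_prop) ‖f‖
      (fun x => f.norm_coe_le_norm _)]
    exact H f
  symm
  refine ae_eq_condExp_of_forall_setIntegral_eq (pastSigma_le t) (hi _ i)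
    (fun s _ _ => (hi _ i).integrableOn) ?_ ?_
  · intro s hs _
    obtain ⟨B, hB, rfl⟩ := past_le_comap t s hs
    have hs' : MeasurableSet (trunc (T := T) (d := d) t ⁻¹' B) := htm hB
    have h1 : m1.real (trunc t ⁻¹' B) = m2.real (trunc t ⁻¹' B) := by
      rw [← map_measureReal_apply htm hB, hmm, map_measureReal_apply htm hB]
    have h2 := key ((trunc t ⁻¹' B).indicator 1) (measurable_one.indicator hs') 1 (by
      intro x; by_cases hx : x ∈ trunc t ⁻¹' B <;> simp [Set.indicator, hx])
    rw [integral_indicator_one hs', integral_indicator_one hs', h1, sub_self] at h2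
    have h3 : ∫ x in trunc t ⁻¹' B, incr t ht i x ∂π = 0 := by
      rw [← integral_indicator hs', h2]
      refine integral_congr_ae (Eventually.of_forall fun x => ?_)
      by_cases hx : x ∈ trunc t ⁻¹' B <;> simp [Set.indicator, hx]
    unfold incr at h3
    rw [integral_sub (hi _ i).integrableOn (hi _ i).integrableOn] at h3
    linarith
  · exact (meas_coord_past' t _ le_rfl i).stronglyMeasurable.aestronglyMeasurable

end Basics

section Glue

variable {T d : ℕ}

lemma coupling_repr (γ : Measure (ℝ × ℝ)) [IsProbabilityMeasure γ] :
    ∃ f : ℝ → unitInterval → ℝ, Measurable (Function.uncurry f) ∧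
      ((γ.map Prod.fst).prod (volume : Measure unitInterval)).map (fun p => (p.1, f p.1 p.2)) = γ := by
  obtain ⟨f, hf, hk⟩ := ProbabilityTheory.Kernel.exists_measurable_map_eq_unitInterval γ.condKernel
  refine ⟨f, hf, ?_⟩
  have hF : Measurable (fun p : ℝ × unitInterval => (p.1, f p.1 p.2)) :=
    measurable_fst.prodMk hf
  have : IsProbabilityMeasure (γ.map Prod.fst) := Measure.isProbabilityMeasure_map (by fun_prop)
  conv_rhs => rw [← γ.disintegrate γ.condKernel]
  refine Measure.ext_of_lintegral _ fun g hg => ?_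
  rw [lintegral_map hg hF, lintegral_prod (fun z => g (z.1, f z.1 z.2)) (hg.comp hF).aemeasurable,
    Measure.lintegral_compProd hg]
  refine lintegral_congr fun a => ?_
  have hfa : Measurable (f a) := hf.comp (measurable_const.prodMk measurable_id)
  rw [← hk a, lintegral_map (by fun_prop) hfa]

lemma lip_integrable {π : Measure (Path T d)} [IsProbabilityMeasure π]
    (hi : ∀ t i, Integrable (fun x : Path T d => x t i) π) {c : Path T d → ℝ} (hcont : Continuous c)
    {L : ℝ} (hc : LipschitzCost L c) : Integrable c π := by
  have h1 : Integrable (fun x : Path T d => |c 0| + L * ∑ t, ∑ i, |x t i|) π :=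
    (integrable_const _).add (Integrable.const_mul
      (integrable_finsetSum _ fun t _ => integrable_finsetSum _ fun i _ => (hi t i).abs) _)
  refine h1.mono' hcont.aestronglyMeasurable (Eventually.of_forall fun x => ?_)
  have := hc x 0
  simp only [Pi.zero_apply, sub_zero] at this
  rw [Real.norm_eq_abs]
  have h2 := abs_sub_abs_le_abs_sub (c x) (c 0)
  linarith

lemma lip_cont {c : Path T d → ℝ} {L : ℝ} (hc : LipschitzCost L c) : Continuous c := by
  rw [continuous_iff_continuousAt]
  intro x
  rw [ContinuousAt, tendsto_iff_dist_tendsto_zero]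
  have h : Tendsto (fun y : Path T d => L * ∑ t, ∑ i, |y t i - x t i|) (nhds x) (nhds 0) := by
    have : Continuous (fun y : Path T d => L * ∑ t, ∑ i, |y t i - x t i|) := by fun_prop
    have h := this.tendsto x
    simpa using h
  exact squeeze_zero (fun _ => dist_nonneg) (fun y => by rw [Real.dist_eq]; exact hc y x) h

lemma glue {μ ν : Fin T → Fin d → Measure ℝ}
    (hμ : ∀ t i, Integrable (fun y : ℝ => y) (μ t i))
    (hν : ∀ t i, Integrable (fun y : ℝ => y) (ν t i))
    (γ : Fin T → Fin d → Measure (ℝ × ℝ)) (hγ : ∀ t i, IsProbabilityMeasure (γ t i))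
    (h1 : ∀ t i, (γ t i).map Prod.fst = μ t i) (h2 : ∀ t i, (γ t i).map Prod.snd = ν t i)
    (ρ : ℝ) (hρ : ∀ t, ∑ i, ∫ p, |p.1 - p.2| ∂(γ t i) ≤ ρ) (ε : ℝ)
    (π : Measure (Path T d)) (hπ : π ∈ MartSetEps μ ε) :
    ∃ π' ∈ MartSetEps ν (ε + 2 * ρ), ∀ (c : Path T d → ℝ) (L : ℝ), 0 ≤ L → LipschitzCost L c →
      |∫ x, c x ∂π - ∫ x, c x ∂π'| ≤ L * (T * ρ) := by
  obtain ⟨hp, hmarg, hdef⟩ := hπ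
  choose f hf hfγ using fun t i => @coupling_repr (γ t i) (hγ t i)
  let U := Fin T → Fin d → unitInterval
  let P : Measure (Path T d × U) := π.prod volume
  let Y : Path T d × U → Path T d := fun z t i => f t i (z.1 t i) (z.2 t i)
  have hYc (t i) : Measurable (fun z => Y z t i) := by
    have : Measurable (fun z : Path T d × U => (z.1 t i, z.2 t i)) := by fun_prop
    exact (hf t i).comp this
  have hY : Measurable Y := measurable_pi_lambda _ fun t => measurable_pi_lambda _ fun i => hYc t i
  have hj (t i) : P.map (fun z => (z.1 t i, Y z t i)) = γ t i := by
    have hU : (volume : Measure U).map (fun u => u t i) = volume := by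
      have a : MeasurePreserving (fun u : U => u t) := measurePreserving_eval _ t
      have b : MeasurePreserving (fun u : Fin d → unitInterval => u i) := measurePreserving_eval _ i
      exact (b.comp a).map_eq
    rw [← hfγ t i]
    have e : (fun z : Path T d × U => (z.1 t i, Y z t i)) =
      (fun p : ℝ × unitInterval => (p.1, f t i p.1 p.2)) ∘
        (Prod.map (fun x : Path T d => x t i) (fun u : U => u t i)) := rfl
    have hF : Measurable (fun p : ℝ × unitInterval => (p.1, f t i p.1 p.2)) :=
      measurable_fst.prodMk (hf t i)
    rw [e, ← Measure.map_map hF (by fun_prop),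
      ← Measure.map_prod_map _ _ (by fun_prop) (by fun_prop), hU, hmarg t i, h1 t i]
  have hjm (t i) : Measurable (fun z : Path T d × U => (z.1 t i, Y z t i)) :=
    Measurable.prodMk (by fun_prop) (hYc t i)
  have hmargY : HasMarginals (P.map Y) ν := by
    intro t i
    rw [Measure.map_map (by fun_prop) hY, ← h2 t i, ← hj t i, Measure.map_map (by fun_prop) (hjm t i)]
    rfl
  have hP' : IsProbabilityMeasure (P.map Y) := Measure.isProbabilityMeasure_map hY.aemeasurable
  have hiX := coord_integrable hmarg hμ
  have hiY := coord_integrable hmargY hν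
  have hiXP (t i) : Integrable (fun z : Path T d × U => z.1 t i) P := (hiX t i).comp_fst _
  have hiYP (t i) : Integrable (fun z => Y z t i) P := (hiY t i).comp_measurable hY
  have hdist (t i) : ∫ z, |z.1 t i - Y z t i| ∂P = ∫ p, |p.1 - p.2| ∂(γ t i) := by
    rw [← hj t i, integral_map (hjm t i).aemeasurable (by fun_prop)]
  have hdI (t i) : Integrable (fun z => |z.1 t i - Y z t i|) P := ((hiXP t i).sub (hiYP t i)).abs
  have hdsum (t) : ∫ z, ∑ i, |z.1 t i - Y z t i| ∂P ≤ ρ := by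
    rw [integral_finsetSum _ fun i _ => hdI t i]
    simp only [hdist]
    exact hρ t
  refine ⟨P.map Y, ⟨hP', hmargY, ?_⟩, ?_⟩
  · intro t ht
    obtain ⟨s, hsm, hs1, hse⟩ := dual2 hiY t ht
    rw [hse]
    have hsm' i : Measurable (s i) := (hsm i).mono (pastSigma_le t) le_rfl
    have hincm i : Measurable (incr (T := T) (d := d) t ht i) := by unfold incr; fun_prop
    rw [integral_map hY.aemeasurable (Measurable.aestronglyMeasurable (by fun_prop))]
    have hsY i : Measurable (fun z => s i (Y z)) := (hsm' i).comp hY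
    have hA : Integrable (fun z : Path T d × U => ∑ i, s i (Y z) * incr t ht i z.1) P :=
      integrable_finsetSum _ fun i _ => ((incr_integrable hiX t ht i).comp_fst _).bdd_mul
        (c := 1) (hsY i).aestronglyMeasurable (Eventually.of_forall fun z => hs1 i (Y z))
    have hB : Integrable (fun z : Path T d × U => ∑ i, s i (Y z) * incr t ht i (Y z)) P :=
      integrable_finsetSum _ fun i _ => ((incr_integrable hiY t ht i).comp_measurable hY).bdd_mul
        (c := 1) (hsY i).aestronglyMeasurable (Eventually.of_forall fun z => hs1 i (Y z))
    have hAle : ∫ z, ∑ i, s i (Y z) * incr t ht i z.1 ∂P ≤ ε := by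
      rw [integral_prod_symm _ hA]
      have : ∀ u : U, ∫ x, ∑ i, s i (Y (x, u)) * incr t ht i x ∂π ≤ ε := by
        intro u
        refine (dual1 hiX t ht (fun i x => s i (Y (x, u))) ?_ 1 (fun i x => hs1 i _)).trans ?_
        · intro i
          refine (hsm i).comp ?_
          refine meas_to_past (m := pastSigma T d t) t _ fun s' hs' => ?_
          refine @measurable_pi_lambda _ _ _ (pastSigma T d t) _ _ fun j => ?_
          have hh : Measurable (fun a : ℝ => f s' j a (u s' j)) :=
            (hf s' j).comp (measurable_id.prodMk measurable_const)
          exact hh.comp (meas_coord_past' t s' hs' j)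
        · rw [one_mul]; exact hdef t ht
      calc _ ≤ ∫ u : U, ε := integral_mono hA.integral_prod_right (integrable_const _) this
        _ = ε := by simp
    have hle : ∀ z, ∑ i, s i (Y z) * incr t ht i (Y z) ≤
        ∑ i, s i (Y z) * incr t ht i z.1 + (∑ i, |z.1 ⟨t + 1, ht⟩ i - Y z ⟨t + 1, ht⟩ i| +
          ∑ i, |z.1 ⟨t, Nat.lt_of_succ_lt ht⟩ i - Y z ⟨t, Nat.lt_of_succ_lt ht⟩ i|) := by
      intro z
      rw [← Finset.sum_add_distrib, ← Finset.sum_add_distrib]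
      refine Finset.sum_le_sum fun i _ => ?_
      set a := z.1 ⟨t + 1, ht⟩ i
      set b := z.1 ⟨t, Nat.lt_of_succ_lt ht⟩ i
      set a' := Y z ⟨t + 1, ht⟩ i
      set b' := Y z ⟨t, Nat.lt_of_succ_lt ht⟩ i
      change s i (Y z) * (a' - b') ≤ s i (Y z) * (a - b) + (|a - a'| + |b - b'|)
      have k1 : |s i (Y z) * ((b - b') - (a - a'))| ≤ 1 * (|a - a'| + |b - b'|) := by
        rw [abs_mul]
        refine mul_le_mul (hs1 i _) ?_ (abs_nonneg _) zero_le_one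
        rw [add_comm]
        exact abs_sub _ _
      have k2 := le_abs_self (s i (Y z) * ((b - b') - (a - a')))
      have k3 : s i (Y z) * (a' - b') = s i (Y z) * (a - b) + s i (Y z) * ((b - b') - (a - a')) := by
        ring
      linarith
    have hI t : Integrable (fun z => ∑ i, |z.1 t i - Y z t i|) P :=
      integrable_finsetSum _ fun i _ => hdI t i
    have := integral_mono hB (hA.add ((hI _).add (hI _))) hle
    rw [integral_add' hA ((hI _).add (hI _)), integral_add' (hI _) (hI _)] at this
    have q1 := hdsum ⟨t + 1, ht⟩
    have q2 := hdsum ⟨t, Nat.lt_of_succ_lt ht⟩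
    linarith
  · intro c L hL hc
    have hcc := lip_cont hc
    have hcX := lip_integrable hiX hcc hc
    have hcY := lip_integrable hiY hcc hc
    have e1 : ∫ x, c x ∂π = ∫ z, c z.1 ∂P := by
      rw [integral_fun_fst]; simp
    have hcX' : Integrable (fun z : Path T d × U => c z.1) P := hcX.comp_fst _
    have hcY' : Integrable (fun z : Path T d × U => c (Y z)) P := hcY.comp_measurable hY
    rw [e1, integral_map hY.aemeasurable hcc.aestronglyMeasurable, ← integral_sub hcX' hcY']
    refine abs_integral_le_integral_abs.trans ?_
    have hI : Integrable (fun z => ∑ t, ∑ i, |z.1 t i - Y z t i|) P :=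
      integrable_finsetSum _ fun t _ => integrable_finsetSum _ fun i _ => hdI t i
    refine (integral_mono (hcX'.sub hcY').abs
      (hI.const_mul L) fun z => hc z.1 (Y z)).trans ?_
    rw [integral_const_mul]
    refine mul_le_mul_of_nonneg_left ?_ hL
    rw [integral_finsetSum _ fun t _ => integrable_finsetSum _ fun i _ => hdI t i]
    refine (Finset.sum_le_sum fun t _ => hdsum t).trans ?_
    simp

end Glue

section Compact

variable {T d : ℕ}

/-- clipping to `[-K, K]` -/
def clip (K : ℕ) (y : ℝ) : ℝ := max (-(K : ℝ)) (min y K)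

lemma clip_cont (K : ℕ) : Continuous (clip K) := by unfold clip; fun_prop

lemma clip_abs (K : ℕ) (y : ℝ) : |clip K y| ≤ K := by
  have : (0 : ℝ) ≤ K := Nat.cast_nonneg K
  unfold clip
  rw [abs_le]
  exact ⟨le_max_left _ _, max_le (by linarith) (min_le_right _ _)⟩

lemma clip_eq (K : ℕ) (y : ℝ) (h : |y| ≤ K) : clip K y = y := by
  rw [abs_le] at h
  unfold clip
  rw [min_eq_left h.2, max_eq_right h.1]

lemma clip_diff (K : ℕ) (y : ℝ) : |y - clip K y| ≤ |y| := by
  have hK : (0 : ℝ) ≤ K := Nat.cast_nonneg K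
  by_cases h : |y| ≤ K
  · rw [clip_eq K y h]; simp
  · unfold clip
    rcases le_total 0 y with hy | hy
    · rw [abs_of_nonneg hy, not_le] at h
      rw [min_eq_right h.le, max_eq_right (by linarith), abs_of_nonneg hy, abs_of_nonneg (by linarith)]
      linarith
    · rw [abs_of_nonpos hy, not_le] at h
      rw [min_eq_left (by linarith), max_eq_left (by linarith), abs_of_nonpos hy,
        abs_of_nonpos (by linarith)]
      linarith

lemma clip_tendsto (μ : Measure ℝ) (hμ : Integrable (fun y : ℝ => y) μ) :
    Tendsto (fun K => ∫ y, |y - clip K y| ∂μ) atTop (nhds 0) := by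
  have h := tendsto_integral_of_dominated_convergence (μ := μ) (F := fun K y => |y - clip K y|)
    (f := fun _ => 0) (fun y => |y|)
    (fun K => (by have := clip_cont K; fun_prop : Continuous _).aestronglyMeasurable) hμ.abs
    (fun K => Eventually.of_forall fun y => by
      rw [Real.norm_eq_abs, abs_abs]; exact clip_diff K y)
    (Eventually.of_forall fun y => by
      refine tendsto_const_nhds.congr' ?_
      filter_upwards [eventually_ge_atTop ⌈|y|⌉₊] with K hK
      rw [clip_eq K y (Nat.ceil_le.1 hK)]; simp)
  simpa using h

/-- coordinatewise clipping -/
def clipP (K : ℕ) (x : Path T d) : Path T d := fun t i => clip K (x t i)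

lemma clipP_cont (K : ℕ) : Continuous (clipP (T := T) (d := d) K) := by
  have := clip_cont K
  unfold clipP; fun_prop

lemma ui_tendsto {μ : Fin T → Fin d → Measure ℝ}
    (hmom : ∀ t i, Integrable (fun y : ℝ => y) (μ t i)) {F : Filter ℕ}
    (p : ℕ → ProbabilityMeasure (Path T d)) (q : ProbabilityMeasure (Path T d))
    (hpq : Tendsto p F (nhds q)) (hp : ∀ n, HasMarginals (p n : Measure (Path T d)) μ)
    (hq : HasMarginals (q : Measure (Path T d)) μ)
    (f : Path T d → ℝ) (hf : Continuous f) (fK : ℕ → BoundedContinuousFunction (Path T d) ℝ) (M : ℝ)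
    (hM : ∀ K x, |f x - fK K x| ≤ M * ∑ t, ∑ i, |x t i - clip K (x t i)|) :
    Tendsto (fun n => ∫ x, f x ∂(p n : Measure (Path T d))) F
      (nhds (∫ x, f x ∂(q : Measure (Path T d)))) := by
  let τ : ℕ → ℝ := fun K => M * ∑ t, ∑ i, ∫ y, |y - clip K y| ∂(μ t i)
  have hτ : Tendsto τ atTop (nhds 0) := by
    have h : Tendsto (fun K => ∑ t, ∑ i, ∫ y, |y - clip K y| ∂(μ t i)) atTop
        (nhds (∑ t : Fin T, ∑ i : Fin d, (0 : ℝ))) :=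
      tendsto_finsetSum _ fun t _ => tendsto_finsetSum _ fun i _ => clip_tendsto _ (hmom t i)
    simpa using h.const_mul M
  have key : ∀ (r : ProbabilityMeasure (Path T d)), HasMarginals (r : Measure (Path T d)) μ → ∀ K,
      |∫ x, f x ∂(r : Measure (Path T d)) - ∫ x, fK K x ∂(r : Measure (Path T d))| ≤ τ K := by
    intro r hr K
    have hi := coord_integrable hr hmom
    have hck := clip_cont K
    have hdi (t i) : Integrable (fun x : Path T d => |x t i - clip K (x t i)|)
        (r : Measure (Path T d)) := by
      refine (hi t i).abs.mono' (by fun_prop) (Eventually.of_forall fun x => ?_)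
      rw [Real.norm_eq_abs, abs_abs]; exact clip_diff K _
    have hS : Integrable (fun x : Path T d => M * ∑ t, ∑ i, |x t i - clip K (x t i)|)
        (r : Measure (Path T d)) := (integrable_finsetSum _ fun t _ =>
          integrable_finsetSum _ fun i _ => hdi t i).const_mul M
    have hfd : Integrable (fun x => f x - fK K x) (r : Measure (Path T d)) :=
      hS.mono' (by fun_prop) (Eventually.of_forall (hM K))
    have hfi : Integrable f (r : Measure (Path T d)) := by
      have := hfd.add ((fK K).integrable (r : Measure (Path T d)))
      refine this.congr (Eventually.of_forall fun x => ?_)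
      simp
    rw [← integral_sub hfi ((fK K).integrable _)]
    refine abs_integral_le_integral_abs.trans ?_
    refine (integral_mono hfd.abs hS (hM K)).trans ?_
    rw [integral_const_mul, integral_finsetSum _ fun t _ => integrable_finsetSum _ fun i _ => hdi t i]
    apply le_of_eq
    congr 1
    refine Finset.sum_congr rfl fun t _ => ?_
    rw [integral_finsetSum _ fun i _ => hdi t i]
    refine Finset.sum_congr rfl fun i _ => ?_
    rw [← hr t i, integral_map (by fun_prop : Measurable (fun x : Path T d => x t i)).aemeasurable (by fun_prop)]
  rw [Metric.tendsto_nhds]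
  intro e he
  obtain ⟨K, hK⟩ := ((Metric.tendsto_nhds.1 hτ) (e / 4) (by positivity)).exists
  rw [Real.dist_eq, sub_zero] at hK
  have hK' := (le_abs_self _).trans_lt hK
  have h1 := (ProbabilityMeasure.tendsto_iff_forall_integral_tendsto.1 hpq) (fK K)
  filter_upwards [(Metric.tendsto_nhds.1 h1) (e / 4) (by positivity)] with n hn
  rw [Real.dist_eq] at hn ⊢
  have a := key (p n) (hp n) K
  have b := key q hq K
  rw [abs_lt] at hn ⊢
  rw [abs_le] at a b
  constructor <;> linarith [a.1, a.2, b.1, b.2, hn.1, hn.2]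

lemma compact_close {μ : Fin T → Fin d → Measure ℝ} (hprob : ∀ t i, IsProbabilityMeasure (μ t i))
    (hmom : ∀ t i, Integrable (fun y : ℝ => y) (μ t i)) (c : Path T d → ℝ) (L : ℝ) (hL : 0 ≤ L)
    (hc : LipschitzCost L c) (η : ℝ) (hη : 0 < η) :
    ∃ δ > 0, ∀ π ∈ MartSetEps μ δ, ∃ π' ∈ MartSet μ, |∫ x, c x ∂π - ∫ x, c x ∂π'| ≤ η := by
  by_contra! hcon
  choose! π hπ hfar using fun n : ℕ => hcon (1 / ((n : ℝ) + 1)) (by positivity)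
  let p : ℕ → ProbabilityMeasure (Path T d) := fun n => ⟨π n, (hπ n).1⟩
  have hpm n : HasMarginals (p n : Measure (Path T d)) μ := (hπ n).2.1
  have hip n := coord_integrable (hpm n) hmom
  have hnorm (x : Path T d) : ‖x‖ ≤ ∑ t, ∑ i, |x t i| := by
    rw [pi_norm_le_iff_of_nonneg (by positivity)]
    intro t
    rw [pi_norm_le_iff_of_nonneg (by positivity)]
    intro i
    rw [Real.norm_eq_abs]
    refine (Finset.single_le_sum (f := fun i => |x t i|) (fun i _ => abs_nonneg _)
      (Finset.mem_univ i)).trans ?_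
    exact Finset.single_le_sum (f := fun t => ∑ i, |x t i|)
      (fun t _ => Finset.sum_nonneg fun i _ => abs_nonneg _) (Finset.mem_univ t)
  have hSi n : Integrable (fun x : Path T d => ∑ t, ∑ i, |x t i|) (p n : Measure (Path T d)) :=
    integrable_finsetSum _ fun t _ => integrable_finsetSum _ fun i _ => (hip n t i).abs
  have hni n : Integrable (fun x : Path T d => ‖x‖) (p n : Measure (Path T d)) :=
    (hSi n).mono' (by fun_prop) (Eventually.of_forall fun x => by simpa using hnorm x)
  obtain ⟨q, hq⟩ := exists_limit p (∑ t, ∑ i, ∫ y, |y| ∂(μ t i)) hni (by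
    intro n
    refine (integral_mono (hni n) (hSi n) hnorm).trans (le_of_eq ?_)
    rw [integral_finsetSum _ fun t _ => integrable_finsetSum _ fun i _ => (hip n t i).abs]
    refine Finset.sum_congr rfl fun t _ => ?_
    rw [integral_finsetSum _ fun i _ => (hip n t i).abs]
    refine Finset.sum_congr rfl fun i _ => ?_
    rw [← hpm n t i, integral_map (by fun_prop : Measurable (fun x : Path T d => x t i)).aemeasurable (by fun_prop)])
  have hqm : HasMarginals (q : Measure (Path T d)) μ := by
    intro t i
    have a := ProbabilityMeasure.tendsto_map_of_tendsto_of_continuous p q hq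
      (f := fun x : Path T d => x t i) (by fun_prop)
    have b : (fun n => (p n).map (f := fun x : Path T d => x t i)
      (by fun_prop : Measurable (fun x : Path T d => x t i)).aemeasurable) =
        fun _ => (⟨μ t i, hprob t i⟩ : ProbabilityMeasure ℝ) := by
      funext n; apply Subtype.ext; exact hpm n t i
    rw [b] at a
    have e := tendsto_nhds_unique a tendsto_const_nhds
    exact congrArg Subtype.val e
  have hiq := coord_integrable hqm hmom
  have hqM : (q : Measure (Path T d)) ∈ MartSet μ := by
    refine ⟨inferInstance, hqm, fun t ht i => ?_⟩
    refine mart_of_bcf hiq t ht i fun h => ?_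
    have hic : Continuous (incr (T := T) (d := d) t ht i) := by unfold incr; fun_prop
    have htc := trunc_cont (T := T) (d := d) t
    let fK : ℕ → BoundedContinuousFunction (Path T d) ℝ := fun K =>
      BoundedContinuousFunction.ofNormedAddCommGroup
        (fun x => h (trunc t x) * incr t ht i (clipP K x))
        (by have := clipP_cont (T := T) (d := d) K; fun_prop) (‖h‖ * (K + K)) (by
          intro x
          rw [norm_mul]
          refine mul_le_mul (h.norm_coe_le_norm _) ?_ (norm_nonneg _) (norm_nonneg _)
          exact (norm_sub_le _ _).trans (add_le_add (clip_abs K _) (clip_abs K _)))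
    have hlim := ui_tendsto hmom p q hq hpm hqm (fun x => h (trunc t x) * incr t ht i x)
      (by fun_prop) fK (2 * ‖h‖) (by
        intro K x
        change |h (trunc t x) * incr t ht i x - h (trunc t x) * incr t ht i (clipP K x)| ≤ _
        rw [← mul_sub, abs_mul, mul_comm 2, mul_assoc]
        refine mul_le_mul (h.norm_coe_le_norm _) ?_ (abs_nonneg _) (norm_nonneg _)
        have hs (s : Fin T) : |x s i - clip K (x s i)| ≤ ∑ t, ∑ i, |x t i - clip K (x t i)| := by
          refine (Finset.single_le_sum (f := fun i => |x s i - clip K (x s i)|)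
            (fun i _ => abs_nonneg _) (Finset.mem_univ i)).trans ?_
          exact Finset.single_le_sum (f := fun t => ∑ i, |x t i - clip K (x t i)|)
            (fun t _ => Finset.sum_nonneg fun i _ => abs_nonneg _) (Finset.mem_univ s)
        have e : incr t ht i x - incr t ht i (clipP K x) =
          (x ⟨t + 1, ht⟩ i - clip K (x ⟨t + 1, ht⟩ i)) -
          (x ⟨t, Nat.lt_of_succ_lt ht⟩ i - clip K (x ⟨t, Nat.lt_of_succ_lt ht⟩ i)) := by
          simp only [incr, clipP]; ring
        rw [e]
        have := abs_sub (x ⟨t + 1, ht⟩ i - clip K (x ⟨t + 1, ht⟩ i))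
          (x ⟨t, Nat.lt_of_succ_lt ht⟩ i - clip K (x ⟨t, Nat.lt_of_succ_lt ht⟩ i))
        linarith [hs ⟨t + 1, ht⟩, hs ⟨t, Nat.lt_of_succ_lt ht⟩])
    have hbound : ∀ n, |∫ x, h (trunc t x) * incr t ht i x ∂(p n : Measure (Path T d))| ≤
        ‖h‖ * (1 / ((n : ℝ) + 1)) := by
      intro n
      have hone : ∀ g : Path T d → ℝ, Measurable[pastSigma T d t] g → (∀ x, |g x| ≤ ‖h‖) →
          ∫ x, g x * incr t ht i x ∂(p n : Measure (Path T d)) ≤ ‖h‖ * (1 / ((n : ℝ) + 1)) := by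
        intro g hg hgb
        have := dual1 (hip n) t ht (fun j x => if j = i then g x else 0) (by
          intro j
          by_cases hji : j = i
          · simpa [hji] using hg
          · simp [hji]) ‖h‖ (by
          intro j x
          by_cases hji : j = i
          · simpa [hji] using hgb x
          · simp [hji])
        simp only [ite_mul, zero_mul, Finset.sum_ite_eq', Finset.mem_univ, if_true] at this
        exact this.trans (mul_le_mul_of_nonneg_left ((hπ n).2.2 t ht) (norm_nonneg _))
      have hm : Measurable[pastSigma T d t] (fun x => h (trunc t x)) :=
        h.continuous.measurable.comp (trunc_meas t)
      rw [abs_le]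
      constructor
      · have := hone (fun x => - h (trunc t x)) hm.neg (fun x => by
          rw [abs_neg]; exact h.norm_coe_le_norm _)
        simp only [neg_mul, integral_neg] at this
        linarith
      · exact hone _ hm (fun x => h.norm_coe_le_norm _)
    have h0 : Tendsto (fun n : ℕ => ‖h‖ * (1 / ((n : ℝ) + 1))) (hyperfilter ℕ : Filter ℕ)
        (nhds 0) := by
      have := (tendsto_one_div_add_atTop_nhds_zero_nat (𝕜 := ℝ)).const_mul ‖h‖
      rw [mul_zero] at this
      exact this.mono_left Nat.hyperfilter_le_atTop
    exact tendsto_nhds_unique hlim (squeeze_zero_norm hbound h0)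
  have hcc := lip_cont hc
  let cK : ℕ → BoundedContinuousFunction (Path T d) ℝ := fun K =>
      BoundedContinuousFunction.ofNormedAddCommGroup
        (fun x => c (clipP K x))
        (by have := clipP_cont (T := T) (d := d) K; fun_prop)
        (|c 0| + L * ∑ t : Fin T, ∑ i : Fin d, (K : ℝ)) (by
          intro x
          rw [Real.norm_eq_abs]
          have h1 := abs_sub_abs_le_abs_sub (c (clipP K x)) (c 0)
          have h2 := hc (clipP K x) 0
          have h3 : L * ∑ t, ∑ i, |clipP K x t i - (0 : Path T d) t i| ≤
              L * ∑ t : Fin T, ∑ i : Fin d, (K : ℝ) := by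
            refine mul_le_mul_of_nonneg_left ?_ hL
            refine Finset.sum_le_sum fun t _ => Finset.sum_le_sum fun i _ => ?_
            simpa [clipP] using clip_abs K (x t i)
          linarith)
  have hlim := ui_tendsto hmom p q hq hpm hqm c hcc cK L (fun K x => hc x (clipP K x))
  obtain ⟨n, hn⟩ := ((Metric.tendsto_nhds.1 hlim) η hη).exists
  rw [Real.dist_eq] at hn
  exact absurd hn (not_lt.2 (hfar n q hqM).le)

end Compact

lemma sSup_close {A B : Set ℝ} (hA : A.Nonempty) (hB : B.Nonempty) (bA : BddAbove A) (η : ℝ)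
    (h1 : ∀ a ∈ A, ∃ b ∈ B, |a - b| ≤ η) (h2 : ∀ b ∈ B, ∃ a ∈ A, |b - a| ≤ η) :
    |sSup B - sSup A| ≤ η := by
  have k : ∀ b ∈ B, b ≤ sSup A + η := by
    intro b hb
    obtain ⟨a, ha, h⟩ := h2 b hb
    have := le_csSup bA ha
    linarith [(abs_le.1 h).2]
  have bB : BddAbove B := ⟨_, k⟩
  have l1 : sSup B ≤ sSup A + η := csSup_le hB k
  have l2 : sSup A ≤ sSup B + η := by
    refine csSup_le hA fun a ha => ?_
    obtain ⟨b, hb, h⟩ := h1 a ha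
    have := le_csSup bB hb
    linarith [(abs_le.1 h).2]
  rw [abs_le]; constructor <;> linarith

lemma sInf_close {A B : Set ℝ} (hA : A.Nonempty) (hB : B.Nonempty) (bA : BddBelow A) (η : ℝ)
    (h1 : ∀ a ∈ A, ∃ b ∈ B, |a - b| ≤ η) (h2 : ∀ b ∈ B, ∃ a ∈ A, |b - a| ≤ η) :
    |sInf B - sInf A| ≤ η := by
  have k : ∀ b ∈ B, sInf A - η ≤ b := by
    intro b hb
    obtain ⟨a, ha, h⟩ := h2 b hb
    have := csInf_le bA ha
    linarith [(abs_le.1 h).1]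
  have bB : BddBelow B := ⟨_, k⟩
  have l1 : sInf A - η ≤ sInf B := le_csInf hB k
  have l2 : sInf B - η ≤ sInf A := by
    refine le_csInf hA fun a ha => ?_
    obtain ⟨b, hb, h⟩ := h1 a ha
    have := csInf_le bB hb
    linarith [(abs_le.1 h).1]
  rw [abs_le]; constructor <;> linarith

lemma martSet_sub {T d : ℕ} {μ : Fin T → Fin d → Measure ℝ} {π : Measure (Path T d)}
    (h : π ∈ MartSet μ) : π ∈ MartSetEps μ 0 := by
  refine ⟨h.1, h.2.1, fun t ht => le_of_eq ?_⟩
  have : ∀ᵐ x ∂π, ∀ i, condNext π t ht i x = x ⟨t, Nat.lt_of_succ_lt ht⟩ i :=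
    ae_all_iff.2 fun i => h.2.2 t ht i
  rw [integral_congr_ae (g := fun _ => (0 : ℝ)) ?_]
  · simp
  · filter_upwards [this] with x hx
    simp [hx]

lemma martSetEps_mono {T d : ℕ} {μ : Fin T → Fin d → Measure ℝ} {π : Measure (Path T d)}
    {a b : ℝ} (hab : a ≤ b) (h : π ∈ MartSetEps μ a) : π ∈ MartSetEps μ b :=
  ⟨h.1, h.2.1, fun t ht => (h.2.2 t ht).trans hab⟩

/-- Theorem, part (i): convergence of the discretised relaxed problems.
If `r_n := 2 max_t Σ_i 𝒲₁(μⁿ_{t,i}, μ_{t,i}) → 0` then `ℳ_{r_n}(μ̌ⁿ) ≠ ∅` for all `n`, and for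
every Lipschitz cost `c` and every sequence `ε_n → 0` with `ε_n ≥ r_n`,
`P̄_{ε_n}(μ̌ⁿ) → P̄(μ̌)` and `P̲_{ε_n}(μ̌ⁿ) → P̲(μ̌)`. -/
theorem mmot_lp_convergence {T d : ℕ} (hT : 0 < T)
    (μ : Fin T → Fin d → Measure ℝ)
    (hprob : ∀ t i, IsProbabilityMeasure (μ t i))
    (hmom : ∀ t i, Integrable (fun y : ℝ => y) (μ t i))
    (hne : (MartSet μ).Nonempty)
    (μn : ℕ → Fin T → Fin d → Measure ℝ)
    (hprobn : ∀ n t i, IsProbabilityMeasure (μn n t i))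
    (hmomn : ∀ n t i, Integrable (fun y : ℝ => y) (μn n t i))
    (r : ℕ → ℝ)
    (hrdef : ∀ n, r n = 2 * Finset.univ.sup' ⟨⟨0, hT⟩, Finset.mem_univ _⟩
      (fun t => ∑ i, W1R (μn n t i) (μ t i)))
    (hr0 : Tendsto r atTop (nhds 0)) :
    (∀ n, (MartSetEps (μn n) (r n)).Nonempty) ∧
    ∀ (c : Path T d → ℝ) (L : ℝ), LipschitzCost L c →
      ∀ ε : ℕ → ℝ, Tendsto ε atTop (nhds 0) → (∀ n, r n ≤ ε n) →
        Tendsto (fun n => PbarEps (μn n) c (ε n)) atTop (nhds (Pbar μ c)) ∧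
        Tendsto (fun n => PlowEps (μn n) c (ε n)) atTop (nhds (Plow μ c)) := by
  have hopt n t i := @exists_opt (μn n t i) (μ t i) (hprobn n t i) (hprob t i) (hmomn n t i) (hmom t i)
  choose γ hγp hγ1 hγ2 hγi hγe using hopt
  have hρ : ∀ n t, ∑ i, ∫ p, |p.1 - p.2| ∂(γ n t i) ≤ r n / 2 := by
    intro n t
    simp only [hγe]
    rw [hrdef n]
    have := Finset.le_sup' (fun t => ∑ i, W1R (μn n t i) (μ t i)) (Finset.mem_univ t)
    linarith
  have hback : ∀ n e, ∀ π ∈ MartSetEps (μn n) e, ∃ π' ∈ MartSetEps μ (e + r n),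
      ∀ (c : Path T d → ℝ) (L : ℝ), 0 ≤ L → LipschitzCost L c →
      |∫ x, c x ∂π - ∫ x, c x ∂π'| ≤ L * (T * (r n / 2)) := by
    intro n e π hπ
    have := glue (hmomn n) hmom (γ n) (hγp n) (hγ1 n) (hγ2 n) (r n / 2) (hρ n) e π hπ
    rwa [show e + 2 * (r n / 2) = e + r n by ring] at this
  have hforw : ∀ n, ∀ π ∈ MartSet μ, ∃ π' ∈ MartSetEps (μn n) (r n),
      ∀ (c : Path T d → ℝ) (L : ℝ), 0 ≤ L → LipschitzCost L c →
      |∫ x, c x ∂π - ∫ x, c x ∂π'| ≤ L * (T * (r n / 2)) := by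
    intro n π hπ
    have := glue hmom (hmomn n) (fun t i => (γ n t i).map Prod.swap)
      (fun t i => by
        have := hγp n t i
        exact Measure.isProbabilityMeasure_map (by fun_prop))
      (fun t i => by
        rw [Measure.map_map (by fun_prop) (by fun_prop), ← hγ2 n t i]; rfl)
      (fun t i => by
        rw [Measure.map_map (by fun_prop) (by fun_prop), ← hγ1 n t i]; rfl) (r n / 2)
      (fun t => by
        refine le_trans (le_of_eq ?_) (hρ n t)
        refine Finset.sum_congr rfl fun i _ => ?_
        rw [integral_map (by fun_prop) (by fun_prop)]
        simp only [Prod.fst_swap, Prod.snd_swap]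
        exact integral_congr_ae (Eventually.of_forall fun p => abs_sub_comm _ _)) 0 π (martSet_sub hπ)
    rwa [show 0 + 2 * (r n / 2) = r n by ring] at this
  refine ⟨fun n => ?_, ?_⟩
  · obtain ⟨π, hπ⟩ := hne
    obtain ⟨π', h, -⟩ := hforw n π hπ
    exact ⟨π', h⟩
  intro c L0 hc0 ε hε hrε
  obtain ⟨L, hL, hc⟩ : ∃ L, 0 ≤ L ∧ LipschitzCost L c := by
    refine ⟨|L0|, abs_nonneg _, fun x y => (hc0 x y).trans ?_⟩
    exact mul_le_mul_of_nonneg_right (le_abs_self _)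
      (Finset.sum_nonneg fun t _ => Finset.sum_nonneg fun i _ => abs_nonneg _)
  have hcc := lip_cont hc
  have hval : ∀ (ν : Fin T → Fin d → Measure ℝ), (∀ t i, Integrable (fun y : ℝ => y) (ν t i)) →
      ∀ π : Measure (Path T d), IsProbabilityMeasure π → HasMarginals π ν → Integrable c π :=
    fun ν hν π hp hm => lip_integrable (coord_integrable hm hν) hcc hc
  set A := primalVals c (MartSet μ) with hA
  have hAne : A.Nonempty := by
    obtain ⟨π, hπ⟩ := hne
    exact ⟨_, π, hπ, hval μ hmom π hπ.1 hπ.2.1, rfl⟩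
  have hAbd : ∀ a ∈ A, |a| ≤ |c 0| + L * ∑ t, ∑ i, ∫ y, |y| ∂(μ t i) := by
    rintro _ ⟨π, ⟨hp, hm, -⟩, hi, rfl⟩
    have hco := coord_integrable hm hmom
    have hS : Integrable (fun x : Path T d => ∑ t, ∑ i, |x t i|) π :=
      integrable_finsetSum _ fun t _ => integrable_finsetSum _ fun i _ => (hco t i).abs
    refine abs_integral_le_integral_abs.trans ?_
    refine (integral_mono (g := fun x : Path T d => |c 0| + L * ∑ t, ∑ i, |x t i|) hi.abs
      ((integrable_const _).add (hS.const_mul L)) fun x => ?_).trans ?_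
    · have := hc x 0
      simp only [Pi.zero_apply, sub_zero] at this
      have h2 := abs_sub_abs_le_abs_sub (c x) (c 0)
      change |c x| ≤ |c 0| + L * ∑ t, ∑ i, |x t i|
      linarith
    · rw [integral_add (integrable_const _) (hS.const_mul L), integral_const_mul,
        integral_finsetSum _ fun t _ => integrable_finsetSum _ fun i _ => (hco t i).abs]
      apply le_of_eq
      simp only [integral_const, probReal_univ, one_smul]
      congr 2
      refine Finset.sum_congr rfl fun t _ => ?_
      rw [integral_finsetSum _ fun i _ => (hco t i).abs]
      refine Finset.sum_congr rfl fun i _ => ?_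
      rw [← hm t i, integral_map (by fun_prop : Measurable (fun x : Path T d => x t i)).aemeasurable (by fun_prop)]
  have bA : BddAbove A := ⟨_, fun a ha => (abs_le.1 (hAbd a ha)).2⟩
  have bB : BddBelow A := ⟨_, fun a ha => (abs_le.1 (hAbd a ha)).1⟩
  have hclose : ∀ η > 0, ∀ᶠ n in atTop,
      (primalVals c (MartSetEps (μn n) (ε n))).Nonempty ∧
      (∀ a ∈ A, ∃ b ∈ primalVals c (MartSetEps (μn n) (ε n)), |a - b| ≤ η) ∧
      (∀ b ∈ primalVals c (MartSetEps (μn n) (ε n)), ∃ a ∈ A, |b - a| ≤ η) := by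
    intro η hη
    obtain ⟨δ, hδ, hδc⟩ := compact_close hprob hmom c L hL hc (η / 2) (by positivity)
    have t1 : Tendsto (fun n => L * (T * (r n / 2))) atTop (nhds 0) := by
      have := ((hr0.div_const 2).const_mul (T : ℝ)).const_mul L
      simpa using this
    have t2 : Tendsto (fun n => ε n + r n) atTop (nhds 0) := by
      simpa using hε.add hr0
    filter_upwards [t1.eventually_lt_const (show (0 : ℝ) < η / 2 by positivity),
      t2.eventually_lt_const hδ] with n h1 h2
    have hAB : ∀ a ∈ A, ∃ b ∈ primalVals c (MartSetEps (μn n) (ε n)), |a - b| ≤ η := by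
      rintro _ ⟨π, hπ, hi, rfl⟩
      obtain ⟨π', hπ', hcl⟩ := hforw n π hπ
      have hπ'' := martSetEps_mono (hrε n) hπ'
      refine ⟨_, ⟨π', hπ'', hval (μn n) (hmomn n) π' hπ'.1 hπ'.2.1, rfl⟩, ?_⟩
      have := hcl c L hL hc
      linarith
    refine ⟨?_, hAB, ?_⟩
    · obtain ⟨a, ha⟩ := hAne
      obtain ⟨b, hb, -⟩ := hAB a ha
      exact ⟨b, hb⟩
    · rintro _ ⟨π, hπ, hi, rfl⟩
      obtain ⟨π', hπ', hcl⟩ := hback n (ε n) π hπ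
      obtain ⟨π'', hπ'', hcl2⟩ := hδc π' (martSetEps_mono h2.le hπ')
      refine ⟨_, ⟨π'', hπ'', hval μ hmom π'' hπ''.1 hπ''.2.1, rfl⟩, ?_⟩
      have := hcl c L hL hc
      have h3 := abs_sub_le (∫ x, c x ∂π) (∫ x, c x ∂π') (∫ x, c x ∂π'')
      linarith
  constructor
  · rw [Metric.tendsto_nhds]
    intro e he
    filter_upwards [hclose (e / 2) (by positivity)] with n hn
    rw [Real.dist_eq]
    have := sSup_close hAne hn.1 bA (e / 2) hn.2.1 hn.2.2
    exact this.trans_lt (by linarith)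
  · rw [Metric.tendsto_nhds]
    intro e he
    filter_upwards [hclose (e / 2) (by positivity)] with n hn
    rw [Real.dist_eq]
    have := sInf_close hAne hn.1 bB (e / 2) hn.2.1 hn.2.2
    exact this.trans_lt (by linarith)

end MMOT
end
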